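/- arXiv:1601.05480 — 12 statements merged into one kernel-verified Lean document; each statement's English description precedes it below -/
import Mathlib

section
/- Let c ∈ ℝ and let f_1,…,f_n : ℝ → ℝ be monotone nondecreasing functions, and set f̄_i(x) = max{f_i(x), x}. Then the maximum over all permutations σ of [n] and integers 0 ≤ k ≤ n of f_{σ(k)}∘⋯∘f_{σ(1)}(c) equals the maximum over all permutations σ of [n] of f̄_{σ(n)}∘⋯∘f̄_{σ(1)}(c). Moreover, if a permutation σ and an integer k with 0 ≤ k ≤ n maximize f_{σ(k)}∘⋯∘f_{σ(1)}(c) over all such pairs, then σ maximizes f̄_{σ(n)}∘⋯∘f̄_{σ(1)}(c) over all permutations of [n]. -/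
/-!
Since `f̄ i` dominates both `f i` and the identity, and the `f i` are monotone, the total composition
of the `f̄ i` along `σ` dominates every partial composition of the `f i` along `σ`
(`compSeq_le_compSeq_max`). Conversely, each `f̄ i` acts at the point where it is evaluated either as
`f i` or as the identity, so a total composition of the `f̄ i` equals the composition of the `f i`
over a sublist of the indices (`exists_sublist_foldl_eq`); a sublist of a permutation is an initial
segment of another permutation (`exists_perm_map_take_eq`). Both maxima therefore agree, and a
maximizing pair `(σ, k)` is sandwiched between them.
-/

/-- `compSeq f σ k c = f (σ k) ∘ ⋯ ∘ f (σ 1) (c)` (0-indexed: applies `f (σ 0)` first). -/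
def compSeq {n : ℕ} (f : Fin n → ℝ → ℝ) (σ : Fin n → Fin n) (k : ℕ) (c : ℝ) : ℝ :=
  (((List.finRange n).take k).map σ).foldl (fun x i => f i x) c

/-- A composition of functions `max (f i x) x` only increases its argument. -/
lemma le_foldl_max {ι : Type*} (f : ι → ℝ → ℝ) (L : List ι) (x : ℝ) :
    x ≤ L.foldl (fun x i => max (f i x) x) x := by
  induction L generalizing x with
  | nil => exact le_rfl
  | cons a L ih => exact (le_max_right _ _).trans (ih _)

lemma foldl_le_foldl_max {ι : Type*} (f : ι → ℝ → ℝ) (hmono : ∀ i, Monotone (f i))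
    (L : List ι) {x y : ℝ} (h : x ≤ y) :
    L.foldl (fun x i => f i x) x ≤ L.foldl (fun x i => max (f i x) x) y := by
  induction L generalizing x y with
  | nil => exact h
  | cons a L ih => exact ih ((hmono a h).trans (le_max_left _ _))

/-- The indices at which `max (f i x) x` is attained by `f i x` form the required sublist. -/
lemma exists_sublist_foldl_eq {ι : Type*} (f : ι → ℝ → ℝ) (L : List ι) (x : ℝ) :
    ∃ S : List ι, S.Sublist L ∧
      L.foldl (fun x i => max (f i x) x) x = S.foldl (fun x i => f i x) x := by
  induction L generalizing x with
  | nil => exact ⟨[], List.Sublist.refl _, rfl⟩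
  | cons a L ih =>
    obtain ⟨S, hS, h⟩ := ih (max (f a x) x)
    rcases le_total x (f a x) with hx | hx
    · refine ⟨a :: S, hS.cons_cons a, ?_⟩
      rw [List.foldl_cons, List.foldl_cons, h, max_eq_left hx]
    · refine ⟨S, hS.cons a, ?_⟩
      rw [List.foldl_cons, h, max_eq_right hx]

/-- A sublist of an enumeration of `Fin n` is an initial segment of some permutation: list its
entries first and the remaining indices afterwards. -/
lemma exists_perm_map_take_eq {n : ℕ} (τ : Equiv.Perm (Fin n)) (S : List (Fin n))
    (hS : S.Sublist ((List.finRange n).map τ)) :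
    ∃ (σ : Equiv.Perm (Fin n)) (k : ℕ), k ≤ n ∧ ((List.finRange n).take k).map σ = S := by
  obtain ⟨R, hR⟩ := hS.exists_perm_append
  have hlen : (S ++ R).length = n := by simpa using hR.length_eq.symm
  have hnodup : (S ++ R).Nodup :=
    hR.nodup_iff.1 ((List.nodup_finRange n).map τ.injective)
  let g : Fin n → Fin n := fun i => (S ++ R).get (Fin.cast hlen.symm i)
  have hg : Function.Injective g := fun i j hij =>
    Fin.cast_injective _ (List.nodup_iff_injective_get.1 hnodup hij)
  refine ⟨Equiv.ofBijective g (Finite.injective_iff_bijective.1 hg), S.length, ?_, ?_⟩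
  · simpa using hS.length_le
  · have hmap : (List.finRange n).map g = S ++ R := by
      apply List.ext_getElem
      · simp [hlen]
      · intro i h₁ h₂
        simp [g]
    rw [List.map_take]
    change ((List.finRange n).map g).take S.length = S
    rw [hmap, List.take_left]

lemma compSeq_le_compSeq_max {n : ℕ} (c : ℝ) (f : Fin n → ℝ → ℝ) (hmono : ∀ i, Monotone (f i))
    (σ : Fin n → Fin n) (k : ℕ) :
    compSeq f σ k c ≤ compSeq (fun i x => max (f i x) x) σ n c := by
  unfold compSeq
  have h : (List.finRange n).take n = (List.finRange n).take k ++ (List.finRange n).drop k := by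
    rw [List.take_append_drop, List.take_of_length_le (by simp)]
  rw [h, List.map_append, List.foldl_append]
  exact (foldl_le_foldl_max f hmono _ le_rfl).trans (le_foldl_max f _ _)

lemma exists_compSeq_max_eq {n : ℕ} (c : ℝ) (f : Fin n → ℝ → ℝ) (τ : Equiv.Perm (Fin n)) :
    ∃ (σ : Equiv.Perm (Fin n)) (k : ℕ), k ≤ n ∧
      compSeq (fun i x => max (f i x) x) τ n c = compSeq f σ k c := by
  obtain ⟨S, hS, h⟩ := exists_sublist_foldl_eq f ((List.finRange n).map τ) c
  obtain ⟨σ, k, hk, hσ⟩ := exists_perm_map_take_eq τ S hS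
  refine ⟨σ, k, hk, ?_⟩
  unfold compSeq
  rw [hσ, List.take_of_length_le (by simp), h]

/-- The maximum of the partial composition ordering problem for monotone nondecreasing
`f i` equals the maximum of the total composition ordering problem for
`f̄ i = max (f i x) x`; moreover any maximizer `(σ, k)` of the former yields a
maximizer `σ` of the latter. -/
theorem stmt1 (n : ℕ) (c : ℝ) (f : Fin n → ℝ → ℝ) (hmono : ∀ i, Monotone (f i)) :
    (∀ (σ : Equiv.Perm (Fin n)) (k : ℕ), k ≤ n →
      ∃ τ : Equiv.Perm (Fin n),
        compSeq f σ k c ≤ compSeq (fun i x => max (f i x) x) τ n c) ∧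
    (∀ τ : Equiv.Perm (Fin n), ∃ (σ : Equiv.Perm (Fin n)) (k : ℕ), k ≤ n ∧
        compSeq (fun i x => max (f i x) x) τ n c ≤ compSeq f σ k c) ∧
    (∀ (σ : Equiv.Perm (Fin n)) (k : ℕ), k ≤ n →
      (∀ (τ : Equiv.Perm (Fin n)) (l : ℕ), l ≤ n → compSeq f τ l c ≤ compSeq f σ k c) →
      ∀ τ : Equiv.Perm (Fin n),
        compSeq (fun i x => max (f i x) x) τ n c ≤
          compSeq (fun i x => max (f i x) x) σ n c) := by
  refine ⟨fun σ k _ => ⟨σ, compSeq_le_compSeq_max c f hmono σ k⟩, fun τ => ?_,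
    fun σ k _ hmax τ => ?_⟩
  · obtain ⟨σ, k, hk, h⟩ := exists_compSeq_max_eq c f τ
    exact ⟨σ, k, hk, h.le⟩
  · obtain ⟨σ', l, hl, h⟩ := exists_compSeq_max_eq c f τ
    exact h.le.trans ((hmax σ' l hl).trans (compSeq_le_compSeq_max c f hmono σ k))
end

section
/- Let c ∈ ℝ and let f_1,…,f_n : ℝ → ℝ be monotone nondecreasing functions. If a permutation σ of [n] satisfies that i ≤ j implies f_{σ(i)} ≼ f_{σ(j)} for all i, j ∈ [n], then σ is optimal for the maximum total composition ordering problem ((f_i)_{i∈[n]}, c): for every permutation τ of [n], f_{σ(n)}∘⋯∘f_{σ(1)}(c) ≥ f_{τ(n)}∘⋯∘f_{τ(1)}(c). -/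
/-- `f ≼ g` iff `f ∘ g ≤ g ∘ f` pointwise. -/
def Preceq (f g : ℝ → ℝ) : Prop := ∀ x : ℝ, f (g x) ≤ g (f x)

lemma foldl_mono_start {ι : Type*} (f : ι → ℝ → ℝ) (hmono : ∀ i, Monotone (f i)) (l : List ι) :
    Monotone fun x => l.foldl (fun x i => f i x) x := by
  induction l with
  | nil => exact monotone_id
  | cons a t ih => exact fun x y h => ih (hmono a h)

/-- Applying `f a` before the functions indexed by `s`, rather than after them, does not decrease
the result, provided `f a ≼ f b` for all `b ∈ s`. -/
lemma foldl_move_front {ι : Type*} (f : ι → ℝ → ℝ) (hmono : ∀ i, Monotone (f i)) (a : ι)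
    (s : List ι) (hs : ∀ b ∈ s, Preceq (f a) (f b)) (x : ℝ) :
    f a (s.foldl (fun x i => f i x) x) ≤ s.foldl (fun x i => f i x) (f a x) := by
  induction s generalizing x with
  | nil => exact le_rfl
  | cons b t ih =>
    exact (ih (fun d hd => hs d (List.mem_cons_of_mem _ hd)) (f b x)).trans
      (foldl_mono_start f hmono t (hs b List.mem_cons_self x))

lemma foldl_le_of_perm {ι : Type*} (f : ι → ℝ → ℝ) (hmono : ∀ i, Monotone (f i)) (l l' : List ι)
    (hl : l.Pairwise fun i j => Preceq (f i) (f j)) (hp : l'.Perm l) (x : ℝ) :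
    l'.foldl (fun x i => f i x) x ≤ l.foldl (fun x i => f i x) x := by
  induction l generalizing l' x with
  | nil => rw [hp.eq_nil]
  | cons a t ih =>
    obtain ⟨s, u, rfl⟩ := List.append_of_mem (hp.mem_iff.2 List.mem_cons_self)
    have hp' : (s ++ u).Perm t := (List.perm_middle.symm.trans hp).cons_inv
    rw [List.pairwise_cons] at hl
    have hs : ∀ b ∈ s, Preceq (f a) (f b) := fun b hb =>
      hl.1 b (hp'.mem_iff.1 (List.mem_append_left _ hb))
    calc (s ++ a :: u).foldl (fun x i => f i x) x
        = u.foldl (fun x i => f i x) (f a (s.foldl (fun x i => f i x) x)) := by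
          rw [List.foldl_append, List.foldl_cons]
      _ ≤ u.foldl (fun x i => f i x) (s.foldl (fun x i => f i x) (f a x)) :=
          foldl_mono_start f hmono u (foldl_move_front f hmono a s hs x)
      _ = (s ++ u).foldl (fun x i => f i x) (f a x) := by rw [List.foldl_append]
      _ ≤ t.foldl (fun x i => f i x) (f a x) := ih _ hl.2 hp' _

/-- If a permutation `σ` sorts the monotone nondecreasing functions `f i` so that
`i ≤ j → f (σ i) ≼ f (σ j)`, then `σ` is optimal for the maximum total composition
ordering problem `((f i)_i, c)`. -/
theorem stmt4 (n : ℕ) (c : ℝ) (f : Fin n → ℝ → ℝ) (hmono : ∀ i, Monotone (f i))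
    (σ : Equiv.Perm (Fin n))
    (hord : ∀ i j : Fin n, i ≤ j → Preceq (f (σ i)) (f (σ j))) :
    ∀ τ : Equiv.Perm (Fin n), compSeq f τ n c ≤ compSeq f σ n c := by
  intro τ
  have htake : (List.finRange n).take n = List.finRange n :=
    List.take_of_length_le (by simp)
  unfold compSeq
  rw [htake]
  refine foldl_le_of_perm f hmono _ _ ?_ ?_ c
  · rw [List.pairwise_map]
    exact (List.pairwise_lt_finRange n).imp fun h => hord _ _ h.le
  -- both index lists enumerate `Fin n`, without repetition
  · refine (List.perm_ext_iff_of_nodup ((List.nodup_finRange n).map τ.injective)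
      ((List.nodup_finRange n).map σ.injective)).2 fun i => ?_
    simp only [List.mem_map, List.mem_finRange, true_and]
    exact iff_of_true (τ.surjective i) (σ.surjective i)
end

section
/- Let f_i(x) = a_i x + b_i and f_j(x) = a_j x + b_j be monotone nondecreasing linear functions that are not the identity (a_i, a_j ≥ 0 and (a_i, b_i), (a_j, b_j) ≠ (1, 0)). Then: (a) if a_i = a_j = 1, then f_i ≃ f_j; (b) if a_i, a_j ≥ 1 and a_i·a_j > 1, then f_i ≼ f_j if and only if γ(f_i) ≤ γ(f_j); (c) if a_i, a_j < 1, then f_i ≼ f_j if and only if γ(f_i) ≤ γ(f_j); (d) if a_i ≥ 1 and a_j < 1, then f_i ≼ f_j if and only if γ(f_i) ≥ γ(f_j), and f_j ≼ f_i if and only if γ(f_i) ≤ γ(f_j). -/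
/-- `γ` of the linear function `x ↦ a x + b`: the fixed point `b / (1 - a)` if `a ≠ 1`,
`+∞` if `a = 1` and `b < 0`, `-∞` if `a = 1` and `b ≥ 0`. -/
noncomputable def gam (a b : ℝ) : EReal :=
  if a = 1 then (if b < 0 then (⊤ : EReal) else (⊥ : EReal))
  else ((b / (1 - a) : ℝ) : EReal)

theorem preceq_iff (a b c d : ℝ) :
    Preceq (fun x => a * x + b) (fun x => c * x + d) ↔ b * (1 - c) ≤ d * (1 - a) := by
  unfold Preceq
  constructor
  · intro h
    have := h 0
    simp only at this
    linarith
  · intro h x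
    simp only
    linarith

theorem gam_le_iff_of_pos {a b c d : ℝ} (h : 0 < (1 - a) * (1 - c)) :
    gam a b ≤ gam c d ↔ b * (1 - c) ≤ d * (1 - a) := by
  have ha : 1 - a ≠ 0 := left_ne_zero_of_mul h.ne'
  have hc : 1 - c ≠ 0 := right_ne_zero_of_mul h.ne'
  have ha' : a ≠ 1 := fun e => ha (by rw [e, sub_self])
  have hc' : c ≠ 1 := fun e => hc (by rw [e, sub_self])
  rw [gam, gam, if_neg ha', if_neg hc', EReal.coe_le_coe_iff, ← mul_le_mul_iff_left₀ h]
  have e1 : b / (1 - a) * ((1 - a) * (1 - c)) = b * (1 - c) := by field_simp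
  have e2 : d / (1 - c) * ((1 - a) * (1 - c)) = d * (1 - a) := by field_simp
  rw [e1, e2]

theorem gam_le_iff_of_neg {a b c d : ℝ} (h : (1 - a) * (1 - c) < 0) :
    gam a b ≤ gam c d ↔ d * (1 - a) ≤ b * (1 - c) := by
  have ha : 1 - a ≠ 0 := left_ne_zero_of_mul h.ne
  have hc : 1 - c ≠ 0 := right_ne_zero_of_mul h.ne
  have ha' : a ≠ 1 := fun e => ha (by rw [e, sub_self])
  have hc' : c ≠ 1 := fun e => hc (by rw [e, sub_self])
  rw [gam, gam, if_neg ha', if_neg hc', EReal.coe_le_coe_iff, ← mul_le_mul_right_of_neg h]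
  have e1 : b / (1 - a) * ((1 - a) * (1 - c)) = b * (1 - c) := by field_simp
  have e2 : d / (1 - c) * ((1 - a) * (1 - c)) = d * (1 - a) := by field_simp
  rw [e1, e2]

theorem gam_one_le_iff {b c d : ℝ} (hc : c ≠ 1) : gam 1 b ≤ gam c d ↔ 0 ≤ b := by
  rw [gam, gam, if_pos rfl, if_neg hc]
  split_ifs with hb
  · simp [hb]
  · simpa using hb

theorem le_gam_one_iff {a b d : ℝ} (ha : a ≠ 1) : gam a b ≤ gam 1 d ↔ d < 0 := by
  rw [gam, gam, if_pos rfl, if_neg ha]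
  split_ifs with hd <;> simp [hd]

theorem stmt5 (ai bi aj bj : ℝ) (hai : 0 ≤ ai) (haj : 0 ≤ aj)
    (hnidi : (ai, bi) ≠ (1, 0)) (hnidj : (aj, bj) ≠ (1, 0)) :
    (ai = 1 → aj = 1 →
      Preceq (fun x => ai * x + bi) (fun x => aj * x + bj) ∧
      Preceq (fun x => aj * x + bj) (fun x => ai * x + bi)) ∧
    (1 ≤ ai → 1 ≤ aj → 1 < ai * aj →
      (Preceq (fun x => ai * x + bi) (fun x => aj * x + bj) ↔ gam ai bi ≤ gam aj bj)) ∧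
    (ai < 1 → aj < 1 →
      (Preceq (fun x => ai * x + bi) (fun x => aj * x + bj) ↔ gam ai bi ≤ gam aj bj)) ∧
    (1 ≤ ai → aj < 1 →
      (Preceq (fun x => ai * x + bi) (fun x => aj * x + bj) ↔ gam aj bj ≤ gam ai bi) ∧
      (Preceq (fun x => aj * x + bj) (fun x => ai * x + bi) ↔ gam ai bi ≤ gam aj bj)) := by
  have hbi : ai = 1 → bi ≠ 0 := fun h h' => hnidi (by rw [h, h'])
  have hbj : aj = 1 → bj ≠ 0 := fun h h' => hnidj (by rw [h, h'])
  simp only [preceq_iff]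
  refine ⟨?_, ?_, ?_, ?_⟩
  · rintro rfl rfl
    simp
  · intro h1 h2 h3
    rcases h1.eq_or_lt with rfl | h1
    · have hj : 1 < aj := by linarith
      rw [gam_one_le_iff hj.ne', sub_self, mul_zero]
      exact ⟨fun h => by nlinarith, fun h => by nlinarith⟩
    · rcases h2.eq_or_lt with rfl | h2
      · rw [le_gam_one_iff h1.ne', sub_self, mul_zero, lt_iff_le_and_ne]
        have hb := hbj rfl
        constructor
        · intro h
          exact ⟨by nlinarith, hb⟩
        · intro h
          nlinarith [h.1]
      · exact (gam_le_iff_of_pos (mul_pos_of_neg_of_neg (by linarith) (by linarith))).symm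
  · intro h1 h2
    exact (gam_le_iff_of_pos (mul_pos (by linarith) (by linarith))).symm
  · intro h1 h2
    rcases h1.eq_or_lt with rfl | h1
    · have hb := hbi rfl
      have hj : 0 < 1 - aj := by linarith
      rw [gam_one_le_iff h2.ne, le_gam_one_iff h2.ne, sub_self, mul_zero, lt_iff_le_and_ne]
      refine ⟨⟨fun h => ⟨by nlinarith, hb⟩, fun h => by nlinarith [h.1]⟩, ?_⟩
      exact mul_nonneg_iff_of_pos_right hj
    · have hneg : (1 - ai) * (1 - aj) < 0 := mul_neg_of_neg_of_pos (by linarith) (by linarith)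
      exact ⟨(gam_le_iff_of_neg (by rwa [mul_comm])).symm, (gam_le_iff_of_neg hneg).symm⟩
end

section
/- Let f_i(x) = a_i x + b_i and f_j(x) = a_j x + b_j be monotone nondecreasing linear functions that are not the identity (a_i, a_j ≥ 0 and (a_i, b_i), (a_j, b_j) ≠ (1, 0)), and let f̄_i(x) = max{f_i(x), x}, f̄_j(x) = max{f_j(x), x}. Then: (a) if a_i, a_j ≥ 1 and γ(f_i) ≤ γ(f_j), then f̄_i ≼ f̄_j; (b) if a_i, a_j < 1 and γ(f_i) ≤ γ(f_j), then f̄_i ≼ f̄_j; (c) if a_i < 1, a_j ≥ 1 and γ(f_i) ≤ γ(f_j), then f̄_i ≃ f̄_j; (d) if a_i ≥ 1, a_j < 1 and γ(f_i) ≤ γ(f_j), then f̄_j ≼ f̄_i. -/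
/-- Only the doubly linear term `f (g x)` of `f̄ (ḡ x)` needs to be bounded. -/
theorem preceq_of_le_max {a b c d : ℝ} (ha : 0 ≤ a) (hc : 0 ≤ c)
    (h : ∀ x, a * (c * x + d) + b ≤
      max (c * (a * x + b) + d) (max (a * x + b) (max (c * x + d) x))) :
    Preceq (fun x => max (a * x + b) x) (fun x => max (c * x + d) x) := by
  intro x
  have hx := h x
  have e1 : a * max (c * x + d) x = max (a * (c * x + d)) (a * x) :=
    mul_max_of_nonneg _ _ ha
  have e2 : c * max (a * x + b) x = max (c * (a * x + b)) (c * x) :=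
    mul_max_of_nonneg _ _ hc
  simp only [e1, e2]
  grind

theorem preceq_of_cross {a b c d : ℝ} (ha : 0 ≤ a) (hc : 0 ≤ c)
    (h : b * (1 - c) ≤ d * (1 - a)) :
    Preceq (fun x => max (a * x + b) x) (fun x => max (c * x + d) x) :=
  preceq_of_le_max ha hc fun x => le_max_of_le_left (by linarith)

theorem gam_one_neg {b : ℝ} (hb : b < 0) : gam 1 b = ⊤ := by simp [gam, hb]

theorem gam_one_nonneg {b : ℝ} (hb : 0 ≤ b) : gam 1 b = ⊥ := by simp [gam, hb.not_gt]

theorem gam_of_ne {a : ℝ} (b : ℝ) (ha : a ≠ 1) : gam a b = ((b / (1 - a) : ℝ) : EReal) := by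
  simp [gam, ha]

/-- A linear function of slope `a ≠ 1` is determined by `a` and its fixed point `γ`. -/
theorem exists_gam {a : ℝ} (b : ℝ) (ha : a ≠ 1) :
    ∃ p : ℝ, gam a b = (p : EReal) ∧ b = p * (1 - a) :=
  ⟨_, gam_of_ne b ha, (div_mul_cancel₀ b (sub_ne_zero.2 ha.symm)).symm⟩

/-- Clearing denominators in `γ(f) ≤ γ(g)` when both slopes are at least `1`. -/
theorem cross_of_one_le {a b c d : ℝ} (ha : 1 ≤ a) (hc : 1 ≤ c) (hg : gam a b ≤ gam c d) :
    b * (1 - c) ≤ d * (1 - a) := by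
  rcases ha.eq_or_lt with rfl | ha
  · rcases lt_or_ge b 0 with hb | hb
    · rw [gam_one_neg hb, top_le_iff] at hg
      rcases hc.eq_or_lt with rfl | hc
      · simp
      · simp [gam_of_ne d hc.ne'] at hg
    · nlinarith
  · obtain ⟨p, hp, rfl⟩ := exists_gam b ha.ne'
    rcases hc.eq_or_lt with rfl | hc
    · rcases lt_or_ge d 0 with hd | hd
      · nlinarith
      · simp [gam_one_nonneg hd, hp] at hg
    · obtain ⟨q, hq, rfl⟩ := exists_gam d hc.ne'
      rw [hp, hq, EReal.coe_le_coe_iff] at hg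
      nlinarith [mul_nonneg (sub_nonneg.2 hg) (mul_pos (sub_pos.2 ha) (sub_pos.2 hc)).le]

theorem stmt6 (ai bi aj bj : ℝ) (hai : 0 ≤ ai) (haj : 0 ≤ aj)
    (hnidi : (ai, bi) ≠ (1, 0)) (hnidj : (aj, bj) ≠ (1, 0))
    (hg : gam ai bi ≤ gam aj bj) :
    (1 ≤ ai → 1 ≤ aj →
      Preceq (fun x => max (ai * x + bi) x) (fun x => max (aj * x + bj) x)) ∧
    (ai < 1 → aj < 1 →
      Preceq (fun x => max (ai * x + bi) x) (fun x => max (aj * x + bj) x)) ∧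
    (ai < 1 → 1 ≤ aj →
      Preceq (fun x => max (ai * x + bi) x) (fun x => max (aj * x + bj) x) ∧
      Preceq (fun x => max (aj * x + bj) x) (fun x => max (ai * x + bi) x)) ∧
    (1 ≤ ai → aj < 1 →
      Preceq (fun x => max (aj * x + bj) x) (fun x => max (ai * x + bi) x)) := by
  refine ⟨fun hi hj => preceq_of_cross hai haj (cross_of_one_le hi hj hg), fun hi hj => ?_,
    fun hi hj => ?_, fun hi hj => ?_⟩
  · obtain ⟨p, hp, rfl⟩ := exists_gam bi hi.ne
    obtain ⟨q, hq, rfl⟩ := exists_gam bj hj.ne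
    rw [hp, hq, EReal.coe_le_coe_iff] at hg
    refine preceq_of_cross hai haj ?_
    nlinarith [mul_nonneg (sub_nonneg.2 hg) (mul_pos (sub_pos.2 hi) (sub_pos.2 hj)).le]
  · obtain ⟨p, hp, rfl⟩ := exists_gam bi hi.ne
    rcases hj.eq_or_lt with rfl | hj
    · -- Here `f_j` is a translation to the left, so it never exceeds the identity.
      have hbj : bj < 0 := by
        by_contra hb
        simp [gam_one_nonneg (not_lt.1 hb), hp] at hg
      constructor
      · refine preceq_of_le_max hai haj fun x => le_max_of_le_right (le_max_of_le_left ?_)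
        nlinarith
      · refine preceq_of_le_max haj hai fun x =>
          le_max_of_le_right (le_max_of_le_right (le_max_of_le_left ?_))
        linarith
    · obtain ⟨q, hq, rfl⟩ := exists_gam bj hj.ne'
      rw [hp, hq, EReal.coe_le_coe_iff] at hg
      constructor
      · refine preceq_of_le_max hai haj fun x => le_max_of_le_right ?_
        rcases le_total x q with hx | hx
        · -- `f_j x ≤ x`, hence `f_i (f_j x) ≤ f_i x`.
          refine le_max_of_le_left ?_
          have h1 : aj * x + q * (1 - aj) ≤ x := by nlinarith
          linarith [mul_le_mul_of_nonneg_left h1 hai]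
        · -- `p ≤ q ≤ x ≤ f_j x`, and `f_i y ≤ y` for `y ≥ p`.
          refine le_max_of_le_right (le_max_of_le_left ?_)
          have h1 : p ≤ aj * x + q * (1 - aj) := by nlinarith
          nlinarith
      · refine preceq_of_le_max haj hai fun x => le_max_of_le_right ?_
        rcases le_total x q with hx | hx
        · -- `f_i x` is a convex combination of `x, p ≤ q`, and `f_j y ≤ y` for `y ≤ q`.
          refine le_max_of_le_right (le_max_of_le_left ?_)
          have h1 : ai * x + p * (1 - ai) ≤ q := by nlinarith
          nlinarith
        · -- `f_i x ≤ x`, hence `f_j (f_i x) ≤ f_j x`.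
          refine le_max_of_le_left ?_
          have h1 : ai * x + p * (1 - ai) ≤ x := by nlinarith
          linarith [mul_le_mul_of_nonneg_left h1 haj]
  · obtain ⟨q, hq, rfl⟩ := exists_gam bj hj.ne
    refine preceq_of_cross haj hai ?_
    rcases hi.eq_or_lt with rfl | hi
    · rcases lt_or_ge bi 0 with hb | hb
      · simp [gam_one_neg hb, hq] at hg
      · nlinarith
    · obtain ⟨p, hp, rfl⟩ := exists_gam bi hi.ne'
      rw [hp, hq, EReal.coe_le_coe_iff] at hg
      nlinarith [mul_nonneg (sub_nonneg.2 hg) (mul_pos (sub_pos.2 hi) (sub_pos.2 hj)).le]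
end

section
/- Let f_i(x) = a_i x + b_i (i ∈ [n]) be monotone nondecreasing linear functions, none of which is the identity (a_i ≥ 0 and (a_i, b_i) ≠ (1, 0)). Let σ be a permutation of [n] compatible with the lexicographic order with respect to (δ(f_i), γ(f_i)). Then i ≤ j implies f̄_{σ(i)} ≼ f̄_{σ(j)} for all i, j ∈ [n], where f̄_i(x) = max{f_i(x), x}. -/
/-- `δ` of the linear function `x ↦ a x + b`: `+1` if `a ≥ 1`, `-1` if `a < 1`. -/
noncomputable def del (a : ℝ) : ℤ := if 1 ≤ a then 1 else -1

/-- It suffices to bound `f (g x)` by one of the four terms in the expansion of `ḡ (f̄ x)`. -/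
lemma preceq_of_core {a b c d : ℝ} (hc : 0 ≤ c)
    (h : ∀ x : ℝ, a * (c * x + d) + b ≤ c * (a * x + b) + d ∨ a * (c * x + d) + b ≤ a * x + b ∨
      a * (c * x + d) + b ≤ c * x + d ∨ a * (c * x + d) + b ≤ x) :
    Preceq (fun x => max (a * x + b) x) (fun x => max (c * x + d) x) := by
  intro x
  show max (a * max (c * x + d) x + b) (max (c * x + d) x) ≤
    max (c * max (a * x + b) x + d) (max (a * x + b) x)
  have h1 : a * x + b ≤ max (a * x + b) x := le_max_left _ _
  have h2 : x ≤ max (a * x + b) x := le_max_right _ _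
  set m := max (a * x + b) x
  have h3 : c * m + d ≤ max (c * m + d) m := le_max_left _ _
  have h4 : m ≤ max (c * m + d) m := le_max_right _ _
  have h5 : c * x ≤ c * m := mul_le_mul_of_nonneg_left h2 hc
  have h6 : c * (a * x + b) ≤ c * m := mul_le_mul_of_nonneg_left h1 hc
  refine max_le ?_ (max_le (by linarith) (by linarith))
  rcases max_choice (c * x + d) x with e | e <;> rw [e]
  · rcases h x with h | h | h | h <;> linarith
  · linarith

lemma core_of_comm {a b c d : ℝ} (h : b * (1 - c) ≤ d * (1 - a)) (x : ℝ) :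
    a * (c * x + d) + b ≤ c * (a * x + b) + d := by
  linarith

lemma preceq_of_lt_one_of_one_le {a b c d : ℝ} (ha : 0 ≤ a) (ha1 : a < 1) (hc : 1 ≤ c) :
    Preceq (fun x => max (a * x + b) x) (fun x => max (c * x + d) x) := by
  refine preceq_of_core (by linarith) fun x => ?_
  rcases le_or_gt (b * (1 - c)) (d * (1 - a)) with h | h
  · exact Or.inl (core_of_comm h x)
  rcases le_total (c * x + d) x with hx | hx
  · exact Or.inr (Or.inl (by nlinarith))
  · refine Or.inr (Or.inr (Or.inl ?_))
    have h1 : 0 ≤ (1 - a) * (c * x + d - x) := mul_nonneg (by linarith) (by linarith)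
    -- `h` and `g x ≥ x` force `c > 1` and put `x` above the fixed point of `f`.
    have h2 : 0 < (c - 1) * ((1 - a) * x - b) := by nlinarith
    have h3 : 0 < (1 - a) * x - b := pos_of_mul_pos_right h2 (by linarith)
    linarith

lemma preceq_of_gam_le {a b c d : ℝ} (ha : 0 ≤ a) (hc : 0 ≤ c) (hδ : del a = del c)
    (hγ : gam a b ≤ gam c d) :
    Preceq (fun x => max (a * x + b) x) (fun x => max (c * x + d) x) := by
  refine preceq_of_core hc fun x => ?_
  have hac : 1 ≤ a ↔ 1 ≤ c := by
    unfold del at hδ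
    split_ifs at hδ with h1 h2 h2 <;> first | omega | tauto
  by_cases ha1 : a = 1
  · subst ha1
    have hc1 : 1 ≤ c := hac.1 le_rfl
    rcases lt_or_ge b 0 with hb | hb
    · exact Or.inr (Or.inr (Or.inl (by linarith)))
    · exact Or.inl (core_of_comm (by nlinarith) x)
  by_cases hc1 : c = 1
  · subst hc1
    -- `γ(f)` is finite, so `γ(g) ≠ -∞` and `g` is a negative shift.
    have hd : d < 0 := by
      by_contra hd
      simp [gam, ha1, hd] at hγ
    exact Or.inr (Or.inl (by nlinarith))
  refine Or.inl (core_of_comm ?_ x)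
  simp only [gam, if_neg ha1, if_neg hc1, EReal.coe_le_coe_iff] at hγ
  have hpos : 0 ≤ (1 - a) * (1 - c) := by
    by_cases h : 1 ≤ a
    · exact mul_nonneg_of_nonpos_of_nonpos (by linarith) (by linarith [hac.1 h])
    · have h' : ¬ 1 ≤ c := fun h' => h (hac.2 h')
      exact mul_nonneg (by linarith) (by linarith)
  have h1 : 1 - a ≠ 0 := fun h => ha1 (by linarith)
  have h2 : 1 - c ≠ 0 := fun h => hc1 (by linarith)
  have h3 := mul_le_mul_of_nonneg_right hγ hpos
  calc b * (1 - c) = b / (1 - a) * ((1 - a) * (1 - c)) := by field_simp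
    _ ≤ d / (1 - c) * ((1 - a) * (1 - c)) := h3
    _ = d * (1 - a) := by field_simp

/-- If `σ` is compatible with the lexicographic order on `(δ(fᵢ), γ(fᵢ))`, then
`i ≤ j` implies `f̄_{σ(i)} ≼ f̄_{σ(j)}`, where `f̄ᵢ(x) = max (aᵢ x + bᵢ) x`. -/
theorem stmt7 (n : ℕ) (a b : Fin n → ℝ) (ha : ∀ i, 0 ≤ a i)
    (hnid : ∀ i, (a i, b i) ≠ (1, 0)) (σ : Equiv.Perm (Fin n))
    (hcompat : ∀ i j : Fin n, i < j →
      del (a (σ i)) < del (a (σ j)) ∨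
        (del (a (σ i)) = del (a (σ j)) ∧
          gam (a (σ i)) (b (σ i)) ≤ gam (a (σ j)) (b (σ j)))) :
    ∀ i j : Fin n, i ≤ j →
      Preceq (fun x => max (a (σ i) * x + b (σ i)) x)
        (fun x => max (a (σ j) * x + b (σ j)) x) := by
  intro i j hij
  rcases hij.lt_or_eq with hlt | rfl
  · rcases hcompat i j hlt with h | ⟨h1, h2⟩
    · have h' : a (σ i) < 1 ∧ 1 ≤ a (σ j) := by
        unfold del at h
        split_ifs at h with h1 h2 h2 <;> simp_all
      exact preceq_of_lt_one_of_one_le (ha _) h'.1 h'.2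
    · exact preceq_of_gam_le (ha _) (ha _) h1 h2
  · exact fun x => le_rfl
end

section
/- Let c ∈ ℝ and, for i ∈ [n], let a_i ≥ 0, b_i, c_i ∈ ℝ, and define h̄_i(x) = max{a_i x + b_i, c_i, x} and f̄_i(x) = max{a_i x + b_i, x}. Then there exists a permutation σ of [n] that is optimal for the maximum total composition ordering problem ((h̄_i)_{i∈[n]}, c) such that no index i with 2 ≤ i ≤ n satisfies f̄_{σ(i)}( h̄_{σ(i−1)}∘⋯∘h̄_{σ(1)}(c) ) < c_{σ(i)}. -/
/-- The function `h̄ᵢ(x) = max {aᵢ x + bᵢ, cᵢ, x}`. -/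
noncomputable abbrev hbar {n : ℕ} (a b cc : Fin n → ℝ) (i : Fin n) (x : ℝ) : ℝ :=
  max (max (a i * x + b i) (cc i)) x

/-- The value reached from `x` by applying the `h̄ᵢ` along the list `l`, head first. -/
noncomputable abbrev run {n : ℕ} (a b cc : Fin n → ℝ) (l : List (Fin n)) (x : ℝ) : ℝ :=
  l.foldl (fun x i => hbar a b cc i x) x

/-- When the `h̄ᵢ` are applied along `l` starting from `x`, at no step does the constant `cᵢ`
strictly exceed `f̄ᵢ`, evaluated at the current value. -/
def Good {n : ℕ} (a b cc : Fin n → ℝ) : List (Fin n) → ℝ → Prop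
  | [], _ => True
  | i :: l, x => cc i ≤ max (a i * x + b i) x ∧ Good a b cc l (hbar a b cc i x)

section
variable {n : ℕ} {a b cc : Fin n → ℝ}

lemma hbar_mono (ha : ∀ i, 0 ≤ a i) (i : Fin n) {x y : ℝ} (h : x ≤ y) :
    hbar a b cc i x ≤ hbar a b cc i y := by
  have := mul_le_mul_of_nonneg_left h (ha i)
  unfold hbar
  gcongr

lemma run_mono (ha : ∀ i, 0 ≤ a i) (l : List (Fin n)) {x y : ℝ} (h : x ≤ y) :
    run a b cc l x ≤ run a b cc l y := by
  induction l generalizing x y with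
  | nil => exact h
  | cons i l ih => exact ih (hbar_mono ha i h)

lemma le_run (l : List (Fin n)) (x : ℝ) : x ≤ run a b cc l x := by
  induction l generalizing x with
  | nil => exact le_rfl
  | cons i l ih => exact (le_max_right _ _).trans (ih _)

lemma cc_le_run {l : List (Fin n)} {k : Fin n} (hk : k ∈ l) (x : ℝ) :
    cc k ≤ run a b cc l x := by
  induction l generalizing x with
  | nil => simp at hk
  | cons i l ih =>
    rcases List.mem_cons.1 hk with rfl | hk
    · exact ((le_max_right _ _).trans (le_max_left _ _)).trans
        (le_run (a := a) (b := b) (cc := cc) l _)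
    · exact ih hk _

lemma Good.mono (ha : ∀ i, 0 ≤ a i) {l : List (Fin n)} {x y : ℝ} (h : x ≤ y)
    (hg : Good a b cc l x) : Good a b cc l y := by
  induction l generalizing x y with
  | nil => trivial
  | cons i l ih =>
    refine ⟨hg.1.trans ?_, ih (hbar_mono ha i h) hg.2⟩
    have := mul_le_mul_of_nonneg_left h (ha i)
    gcongr

lemma good_append_of_le {p q : List (Fin n)} {x : ℝ} (h : ∀ k ∈ p, cc k ≤ x)
    (hq : Good a b cc q (run a b cc p x)) : Good a b cc (p ++ q) x := by
  induction p generalizing x with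
  | nil => exact hq
  | cons i p ih =>
    refine ⟨(h i (by simp)).trans (le_max_right _ _), ih (fun k hk => ?_) hq⟩
    exact (h k (by simp [hk])).trans (le_max_right _ _)

/-- Either no index of `l` is bad, or `l` splits at its last bad index `j`. -/
lemma good_or_split (l : List (Fin n)) (x : ℝ) :
    Good a b cc l x ∨ ∃ p j q, l = p ++ j :: q ∧
      max (a j * run a b cc p x + b j) (run a b cc p x) < cc j ∧
      Good a b cc q (hbar a b cc j (run a b cc p x)) := by
  induction l generalizing x with
  | nil => exact Or.inl trivial
  | cons i l ih =>
    rcases ih (hbar a b cc i x) with h | ⟨p, j, q, rfl, h1, h2⟩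
    · rcases le_or_gt (cc i) (max (a i * x + b i) x) with hi | hi
      · exact Or.inl ⟨hi, h⟩
      · exact Or.inr ⟨[], i, l, rfl, hi, h⟩
    · exact Or.inr ⟨i :: p, j, q, rfl, h1, h2⟩

/-- Any order can be rearranged, without decreasing the final value, so that only its first
index may be bad. -/
lemma exists_perm_tail_good (ha : ∀ i, 0 ≤ a i) (l : List (Fin n)) (x : ℝ) :
    ∃ l' : List (Fin n), l'.Perm l ∧ run a b cc l x ≤ run a b cc l' x ∧
      ∀ i t, l' = i :: t → Good a b cc t (hbar a b cc i x) := by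
  rcases good_or_split (a := a) (b := b) (cc := cc) l x with h | ⟨p, j, q, rfl, h1, h2⟩
  · refine ⟨l, List.Perm.refl _, le_rfl, ?_⟩
    rintro i t rfl
    exact h.2
  · have hj : cc j ≤ hbar a b cc j x := (le_max_right _ _).trans (le_max_left _ _)
    -- the value just after `j` in the old order is exactly `cc j`
    have key : hbar a b cc j (run a b cc p x) ≤ run a b cc p (hbar a b cc j x) := by
      refine le_trans ?_ (hj.trans (le_run p _))
      exact max_le (max_le ((le_max_left _ _).trans h1.le) le_rfl) ((le_max_right _ _).trans h1.le)
    refine ⟨j :: (p ++ q), List.perm_middle.symm, ?_, ?_⟩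
    · have := run_mono (b := b) (cc := cc) ha q key
      simpa [run, List.foldl_append] using this
    · intro i t h
      obtain ⟨rfl, rfl⟩ := List.cons.inj h
      refine good_append_of_le (fun k hk => ?_) (h2.mono ha key)
      exact (cc_le_run hk x).trans (((le_max_right _ _).trans h1.le).trans hj)

lemma Good.getElem {l : List (Fin n)} {x : ℝ} (hg : Good a b cc l x) (j : ℕ) (hj : j < l.length) :
    cc l[j] ≤ max (a l[j] * run a b cc (l.take j) x + b l[j]) (run a b cc (l.take j) x) := by
  induction l generalizing x j with
  | nil => simp at hj
  | cons i l ih =>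
    cases j with
    | zero => exact hg.1
    | succ j => exact ih hg.2 j (by simpa using hj)

end

/-- For `h̄ᵢ(x) = max (aᵢx + bᵢ) (cᵢ) x` and `f̄ᵢ(x) = max (aᵢx + bᵢ) x`, there is an
optimal permutation `σ` for the maximum total composition ordering problem `((h̄ᵢ)ᵢ, c)`
such that no position `j ≥ 2` (1-indexed; `j.val ≥ 1` with 0-indexing) satisfies
`f̄_{σ(j)}(h̄_{σ(j-1)} ∘ ⋯ ∘ h̄_{σ(1)}(c)) < c_{σ(j)}`. -/
theorem stmt9 (n : ℕ) (c : ℝ) (a b cc : Fin n → ℝ) (ha : ∀ i, 0 ≤ a i) :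
    ∃ σ : Equiv.Perm (Fin n),
      (∀ τ : Equiv.Perm (Fin n),
        compSeq (fun i x => max (max (a i * x + b i) (cc i)) x) τ n c ≤
          compSeq (fun i x => max (max (a i * x + b i) (cc i)) x) σ n c) ∧
      (∀ j : Fin n, 1 ≤ j.val →
        ¬ (max (a (σ j) * compSeq (fun i x => max (max (a i * x + b i) (cc i)) x) σ j.val c
                  + b (σ j))
              (compSeq (fun i x => max (max (a i * x + b i) (cc i)) x) σ j.val c)
            < cc (σ j))) := by
  obtain ⟨σ, hσ⟩ := Finite.exists_max (fun τ : Equiv.Perm (Fin n) =>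
    compSeq (fun i x => max (max (a i * x + b i) (cc i)) x) τ n c)
  obtain ⟨l, hperm, hle, hgood⟩ :=
    exists_perm_tail_good (b := b) (cc := cc) ha ((List.finRange n).map σ) c
  have hlen : l.length = n := by simpa using hperm.length_eq
  have hnd : l.Nodup := hperm.nodup_iff.2 ((List.nodup_finRange n).map σ.injective)
  let s : Fin n → Fin n := fun j => l[j.val]'(by rw [hlen]; exact j.2)
  have hs : Function.Injective s := by
    intro i j hij
    exact Fin.ext ((hnd.getElem_inj_iff).1 hij)
  have hmap : (List.finRange n).map s = l := by
    apply List.ext_getElem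
    · simp [hlen]
    · intro i h1 h2
      simp [s]
  have hcomp : ∀ k, compSeq (fun i x => max (max (a i * x + b i) (cc i)) x) s k c
      = run a b cc (l.take k) c := by
    intro k
    unfold compSeq
    rw [List.map_take, hmap]
  refine ⟨Equiv.ofBijective s (Finite.injective_iff_bijective.1 hs), fun τ => ?_, fun j hj => ?_⟩
  · refine (hσ τ).trans ?_
    rw [Equiv.coe_ofBijective, hcomp, List.take_of_length_le hlen.le]
    refine le_trans (le_of_eq ?_) hle
    unfold compSeq
    rw [List.take_of_length_le (by simp)]
  · rw [Equiv.coe_ofBijective, hcomp, not_lt]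
    obtain ⟨j, hjn⟩ := j
    obtain ⟨m, rfl⟩ : ∃ m, j = m + 1 := ⟨j - 1, by simp at hj; omega⟩
    cases l with
    | nil => simp at hlen; omega
    | cons i t =>
      exact (hgood i t rfl).getElem m (by simp at hlen; omega)
end

section
/- Let f_i(x) = a_i x + b_i (i = 1, 2, 3, 4) be monotone nondecreasing linear functions, none of which is the identity, with a_1, a_3 ≥ 1 and 0 ≤ a_2, a_4 < 1. If γ(f_1) ≥ γ(f_2) ≥ γ(f_3) ≥ γ(f_4), then for every x ∈ ℝ, f_4∘f_3∘f_2∘f_1(x) ≤ max{ f_4∘f_1∘f_3∘f_2(x), f_3∘f_2∘f_4∘f_1(x) }. -/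
/-- For non-identity monotone linear `fᵢ(x) = aᵢx + bᵢ` with `a₁, a₃ ≥ 1`,
`0 ≤ a₂, a₄ < 1` and `γ(f₁) ≥ γ(f₂) ≥ γ(f₃) ≥ γ(f₄)`:
`f₄∘f₃∘f₂∘f₁ ≤ max (f₄∘f₁∘f₃∘f₂) (f₃∘f₂∘f₄∘f₁)` pointwise. -/
theorem stmt11 (a1 b1 a2 b2 a3 b3 a4 b4 : ℝ)
    (ha1 : 1 ≤ a1) (ha3 : 1 ≤ a3)
    (ha2 : 0 ≤ a2) (ha2' : a2 < 1) (ha4 : 0 ≤ a4) (ha4' : a4 < 1)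
    (hn1 : (a1, b1) ≠ (1, 0)) (hn2 : (a2, b2) ≠ (1, 0))
    (hn3 : (a3, b3) ≠ (1, 0)) (hn4 : (a4, b4) ≠ (1, 0))
    (h21 : gam a2 b2 ≤ gam a1 b1) (h32 : gam a3 b3 ≤ gam a2 b2)
    (h43 : gam a4 b4 ≤ gam a3 b3) :
    ∀ x : ℝ,
      a4 * (a3 * (a2 * (a1 * x + b1) + b2) + b3) + b4 ≤
        max (a4 * (a1 * (a3 * (a2 * x + b2) + b3) + b1) + b4)
          (a3 * (a2 * (a4 * (a1 * x + b1) + b4) + b2) + b3) := by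
  intro x
  have hγ2 : gam a2 b2 = ((b2 / (1 - a2) : ℝ) : EReal) := by
    simp [gam, ha2'.ne]
  have hγ4 : gam a4 b4 = ((b4 / (1 - a4) : ℝ) : EReal) := by
    simp [gam, ha4'.ne]
  -- `γ(f₃)` is squeezed between two reals, which excludes slope `1`.
  have h3 : a3 ≠ 1 := by
    rintro rfl
    rw [hγ2] at h32
    rw [hγ4] at h43
    by_cases hb : b3 < 0 <;> simp [gam, hb] at h32 h43
  have hγ3 : gam a3 b3 = ((b3 / (1 - a3) : ℝ) : EReal) := by
    simp [gam, h3]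
  have h3' : 1 < a3 := lt_of_le_of_ne ha3 h3.symm
  rw [hγ3, hγ2, EReal.coe_le_coe_iff] at h32
  rw [hγ4, hγ3, EReal.coe_le_coe_iff] at h43
  obtain ⟨c2, hc2⟩ : ∃ c, c = b2 / (1 - a2) := ⟨_, rfl⟩
  obtain ⟨c3, hc3⟩ : ∃ c, c = b3 / (1 - a3) := ⟨_, rfl⟩
  obtain ⟨c4, hc4⟩ : ∃ c, c = b4 / (1 - a4) := ⟨_, rfl⟩
  have e2 : b2 = c2 * (1 - a2) := by
    rw [hc2, div_mul_cancel₀ _ (by linarith)]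
  have e3 : b3 = c3 * (1 - a3) := by
    rw [hc3, div_mul_cancel₀ _ (sub_ne_zero.mpr h3.symm)]
  have e4 : b4 = c4 * (1 - a4) := by
    rw [hc4, div_mul_cancel₀ _ (by linarith)]
  rw [← hc2, ← hc3] at h32
  rw [← hc3, ← hc4] at h43
  rcases le_or_gt 1 (a3 * a2) with hA | hA
  · refine le_max_of_le_left ?_
    have key : (a3 * b2 + b3) * (1 - a1) ≤ b1 * (1 - a3 * a2) := by
      rw [hγ2, ← hc2] at h21
      by_cases h1 : a1 = 1
      · subst h1
        have hb : b1 < 0 := by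
          by_contra hb
          simp [gam, hb] at h21
        nlinarith
      · have hγ1 : gam a1 b1 = ((b1 / (1 - a1) : ℝ) : EReal) := by
          simp [gam, h1]
        rw [hγ1, EReal.coe_le_coe_iff] at h21
        obtain ⟨c1, hc1⟩ : ∃ c, c = b1 / (1 - a1) := ⟨_, rfl⟩
        have e1 : b1 = c1 * (1 - a1) := by
          rw [hc1, div_mul_cancel₀ _ (sub_ne_zero.mpr (Ne.symm h1))]
        rw [← hc1] at h21
        have hB : 0 ≤ (a3 * b2 + b3) - c1 * (1 - a3 * a2) := by
          rw [e2, e3]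
          have p := mul_nonneg (sub_nonneg.mpr h21) (sub_nonneg.mpr hA)
          have q := mul_nonneg (sub_nonneg.mpr h32) (sub_nonneg.mpr ha3)
          linarith
        have := mul_nonneg (sub_nonneg.mpr ha1) hB
        rw [e1]
        linarith
    have := mul_nonneg ha4 (sub_nonneg.mpr key)
    linarith
  · refine le_max_of_le_right ?_
    have hB : 0 ≤ (a3 * b2 + b3) - c4 * (1 - a3 * a2) := by
      rw [e2, e3]
      have p := mul_nonneg (sub_nonneg.mpr h43) (sub_nonneg.mpr hA.le)
      have q := mul_nonneg (sub_nonneg.mpr h32)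
        (mul_nonneg (zero_le_one.trans ha3) (sub_nonneg.mpr ha2'.le))
      linarith
    have := mul_nonneg (sub_nonneg.mpr ha4'.le) hB
    rw [e4]
    linarith
end

section
/- Let f_i(x) = a_i x + b_i (i = 1, 2, 3, 4) be monotone nondecreasing linear functions, none of which is the identity, with 0 ≤ a_1, a_3 < 1 and a_2, a_4 ≥ 1. If γ(f_1) ≥ γ(f_2) ≥ γ(f_3) ≥ γ(f_4), then for every x ∈ ℝ, f_4∘f_3∘f_2∘f_1(x) ≤ max{ f_4∘f_1∘f_3∘f_2(x), f_3∘f_2∘f_4∘f_1(x) }. -/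
lemma gam_of_lt {a b : ℝ} (h : a < 1) : gam a b = ((b / (1 - a) : ℝ) : EReal) := by
  simp [gam, h.ne]

/-- An expanding map moves points to the left of its `γ` further left. The case `a = 1` with
`γ = +∞` is a translation by `b < 0`. -/
lemma map_le_of_le_gam {a b c : ℝ} (ha : 1 ≤ a) (h : (c : EReal) ≤ gam a b) :
    a * c + b ≤ c := by
  unfold gam at h
  split_ifs at h with h1 h2
  · subst h1; linarith
  · simp at h
  · have hpos : 0 < a - 1 := sub_pos.2 (lt_of_le_of_ne ha (Ne.symm h1))
    have hle : c ≤ b / (1 - a) := EReal.coe_le_coe_iff.1 h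
    rw [← neg_sub a 1, div_neg, le_neg, div_le_iff₀ hpos] at hle
    linarith

/-- An expanding map moves points to the right of its `γ` further right. The case `a = 1` with
`γ = -∞` is a translation by `b ≥ 0`. -/
lemma le_map_of_gam_le {a b c : ℝ} (ha : 1 ≤ a) (h : gam a b ≤ (c : EReal)) :
    c ≤ a * c + b := by
  unfold gam at h
  split_ifs at h with h1 h2
  · simp at h
  · subst h1; linarith
  · have hpos : 0 < a - 1 := sub_pos.2 (lt_of_le_of_ne ha (Ne.symm h1))
    have hle : b / (1 - a) ≤ c := EReal.coe_le_coe_iff.1 h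
    rw [← neg_sub a 1, div_neg, neg_le, le_div_iff₀ hpos] at hle
    linarith

/-- For non-identity monotone linear `fᵢ(x) = aᵢx + bᵢ` with `0 ≤ a₁, a₃ < 1`,
`a₂, a₄ ≥ 1` and `γ(f₁) ≥ γ(f₂) ≥ γ(f₃) ≥ γ(f₄)`:
`f₄∘f₃∘f₂∘f₁ ≤ max (f₄∘f₁∘f₃∘f₂) (f₃∘f₂∘f₄∘f₁)` pointwise. -/
theorem stmt12 (a1 b1 a2 b2 a3 b3 a4 b4 : ℝ)
    (ha1 : 0 ≤ a1) (ha1' : a1 < 1) (ha3 : 0 ≤ a3) (ha3' : a3 < 1)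
    (ha2 : 1 ≤ a2) (ha4 : 1 ≤ a4)
    (hn1 : (a1, b1) ≠ (1, 0)) (hn2 : (a2, b2) ≠ (1, 0))
    (hn3 : (a3, b3) ≠ (1, 0)) (hn4 : (a4, b4) ≠ (1, 0))
    (h21 : gam a2 b2 ≤ gam a1 b1) (h32 : gam a3 b3 ≤ gam a2 b2)
    (h43 : gam a4 b4 ≤ gam a3 b3) :
    ∀ x : ℝ,
      a4 * (a3 * (a2 * (a1 * x + b1) + b2) + b3) + b4 ≤
        max (a4 * (a1 * (a3 * (a2 * x + b2) + b3) + b1) + b4)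
          (a3 * (a2 * (a4 * (a1 * x + b1) + b4) + b2) + b3) := by
  intro x
  have h31 := h32.trans h21
  rw [gam_of_lt ha1', gam_of_lt ha3', EReal.coe_le_coe_iff] at h31
  rw [gam_of_lt ha3'] at h32 h43
  have e1 : b1 = b1 / (1 - a1) * (1 - a1) := by
    rw [div_mul_cancel₀]; linarith
  have e3 : b3 = b3 / (1 - a3) * (1 - a3) := by
    rw [div_mul_cancel₀]; linarith
  have h2 := map_le_of_le_gam ha2 h32
  have h4 := le_map_of_gam_le ha4 h43
  generalize b1 / (1 - a1) = c1 at *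
  generalize b3 / (1 - a3) = c3 at *
  subst e1 e3
  -- `g c₃ ≤ c₃` for `g = f₃ ∘ f₂`
  have hg : a3 * (a2 * c3 + b2 - c3) ≤ 0 :=
    mul_nonpos_of_nonneg_of_nonpos ha3 (by linarith)
  rcases le_total (a2 * a3) 1 with h | h
  · apply le_max_of_le_left
    -- `g c₁ - c₁ = (g c₃ - c₃) - (1 - a) (c₁ - c₃)`
    have hc : 0 ≤ (1 - a2 * a3) * (c1 - c3) :=
      mul_nonneg (by linarith) (by linarith)
    have key : 0 ≤ a4 * ((1 - a1) *
        ((1 - a2 * a3) * (c1 - c3) - a3 * (a2 * c3 + b2 - c3))) :=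
      mul_nonneg (by linarith) (mul_nonneg (by linarith) (by linarith))
    linarith
  · apply le_max_of_le_right
    -- `g ∘ f₄ - f₄ ∘ g = (a - 1) (f₄ c₃ - c₃) - (a₄ - 1) (g c₃ - c₃)`
    have k1 : 0 ≤ (a2 * a3 - 1) * (a4 * c3 + b4 - c3) :=
      mul_nonneg (by linarith) (by linarith)
    have k2 : (a4 - 1) * (a3 * (a2 * c3 + b2 - c3)) ≤ 0 :=
      mul_nonpos_of_nonneg_of_nonpos (by linarith) hg
    linarith
end

section
/- Let c ∈ ℝ and let f_i(x) = a_i x + b_i (i ∈ [n]) be monotone nondecreasing linear functions, none of which is the identity (a_i ≥ 0 and (a_i, b_i) ≠ (1, 0)). Then there exists a permutation σ of [n] that is optimal for the maximum total composition ordering problem ((f_i)_{i∈[n]}, c) and such that at most two indices i with 1 ≤ i ≤ n−1 satisfy δ(f_{σ(i)}) · δ(f_{σ(i+1)}) = −1. -/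
/-! ### Inequalities for four consecutive linear functions -/

section Algebra

variable {aA bA aB bB aC bC aD bD x : ℝ}

/-- The consequences of optimality for four consecutive blocks `A, B, C, D` at the end of an
ordering: the exchanges of adjacent blocks strictly lower the value, the exchanges of a block with
an adjacent pair do not raise it. Here `p, q, r, s, t` are the determinants
`[B, A], [C, B], [A, C], [B, D], [D, C]`, and the last two conjuncts are the second coordinates of
the linear relations between three plane vectors. -/
lemma core_facts (hC : 0 ≤ aC) (hD : 0 ≤ aD)
    (h1 : aD * (aC * (aA * (aB * x + bB) + bA) + bC) + bD
      < aD * (aC * (aB * (aA * x + bA) + bB) + bC) + bD)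
    (h2 : aD * (aB * (aC * (aA * x + bA) + bC) + bB) + bD
      < aD * (aC * (aB * (aA * x + bA) + bB) + bC) + bD)
    (h3 : aC * (aD * (aB * (aA * x + bA) + bB) + bD) + bC
      < aD * (aC * (aB * (aA * x + bA) + bB) + bC) + bD)
    (h4 : aD * (aA * (aC * (aB * x + bB) + bC) + bA) + bD
      ≤ aD * (aC * (aB * (aA * x + bA) + bB) + bC) + bD)
    (h5 : aB * (aD * (aC * (aA * x + bA) + bC) + bD) + bB
      ≤ aD * (aC * (aB * (aA * x + bA) + bB) + bC) + bD)
    (h6 : aD * (aB * (aA * (aC * x + bC) + bA) + bB) + bD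
      ≤ aD * (aC * (aB * (aA * x + bA) + bB) + bC) + bD)
    (h7 : aC * (aB * (aD * (aA * x + bA) + bD) + bB) + bC
      ≤ aD * (aC * (aB * (aA * x + bA) + bB) + bC) + bD) :
    ∃ p q r s t : ℝ, 0 < aC ∧ 0 < aD ∧ 0 < p ∧ 0 < q ∧ 0 < t ∧
      r ≤ aC * p ∧ aB * r ≤ q ∧ aC * s ≤ t ∧ s ≤ aD * q ∧
      q * (1 - aA) + r * (1 - aB) + p * (1 - aC) = 0 ∧
      t * (1 - aB) + s * (1 - aC) + q * (1 - aD) = 0 := by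
  have e1 : 0 < aD * (aC * (bB * (1 - aA) - bA * (1 - aB))) := by linarith
  have e2 : 0 < aD * (bC * (1 - aB) - bB * (1 - aC)) := by linarith
  have hD' : 0 < aD := hD.lt_of_ne (by rintro rfl; simp at e2)
  have e1' := pos_of_mul_pos_right e1 hD
  have hC' : 0 < aC := hC.lt_of_ne (by rintro rfl; simp at e1')
  refine ⟨bB * (1 - aA) - bA * (1 - aB), bC * (1 - aB) - bB * (1 - aC),
    bA * (1 - aC) - bC * (1 - aA), bB * (1 - aD) - bD * (1 - aB),
    bD * (1 - aC) - bC * (1 - aD), hC', hD', pos_of_mul_pos_right e1' hC,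
    pos_of_mul_pos_right e2 hD, by linarith, ?_, ?_, by linarith, by linarith, by ring, by ring⟩
  · refine le_of_mul_le_mul_left ?_ hD'
    linarith
  · refine le_of_mul_le_mul_left ?_ hD'
    linarith

/-- The sign pattern `-+-+` cannot satisfy the conclusions of `core_facts`. -/
lemma core_neg {p q r s t : ℝ} (hA0 : 0 ≤ aA) (hA : aA < 1) (hB : 1 ≤ aB) (hC : aC < 1)
    (hD : 1 ≤ aD) (hC0 : 0 < aC) (hp : 0 < p) (hq : 0 < q) (ht : 0 < t)
    (h1 : r ≤ aC * p) (h2 : aB * r ≤ q) (h3 : aC * s ≤ t) (h4 : s ≤ aD * q)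
    (i1 : q * (1 - aA) + r * (1 - aB) + p * (1 - aC) = 0)
    (i2 : t * (1 - aB) + s * (1 - aC) + q * (1 - aD) = 0) : False := by
  have m1 : 0 < q * (1 - aA) := mul_pos hq (by linarith)
  have m2 : 0 < p * (1 - aC) := mul_pos hp (by linarith)
  have hr : 0 < r := pos_of_mul_pos_left (b := aB - 1) (by linarith) (by linarith)
  have hB' : 0 < aB - 1 := pos_of_mul_pos_right (a := r) (by linarith) hr.le
  have m3 : 0 < t * (aB - 1) := mul_pos ht hB'
  have m4 : 0 ≤ q * (aD - 1) := mul_nonneg hq.le (by linarith)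
  have hs : 0 < s := pos_of_mul_pos_left (b := 1 - aC) (by linarith) (by linarith)
  have k1 : 0 ≤ r * (aA * aB * aC - 1) := by
    have u1 := mul_le_mul_of_nonneg_left h2 (mul_nonneg hC0.le (by linarith : 0 ≤ 1 - aA))
    have u2 := mul_le_mul_of_nonneg_right h1 (by linarith : 0 ≤ 1 - aC)
    linear_combination u1 + u2 + aC * i1
  have k2 : 0 ≤ s * (1 - aB * aC * aD) := by
    have u1 := mul_le_mul_of_nonneg_left h3 (mul_nonneg (by linarith : 0 ≤ aD) hB'.le)
    have u2 := mul_le_mul_of_nonneg_right h4 (by linarith : 0 ≤ aD - 1)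
    linear_combination u1 + u2 - aD * i2
  have k1' := nonneg_of_mul_nonneg_right k1 hr
  have k2' := nonneg_of_mul_nonneg_right k2 hs
  have : 0 < aB * aC := mul_pos (by linarith) hC0
  nlinarith

/-- The sign pattern `+-+-` cannot satisfy the conclusions of `core_facts`. -/
lemma core_pos {p q r s t : ℝ} (hA : 1 ≤ aA) (hB0 : 0 ≤ aB) (hB : aB < 1) (hC : 1 ≤ aC)
    (hD : aD < 1) (hD0 : 0 < aD) (hp : 0 < p) (hq : 0 < q) (ht : 0 < t)
    (h1 : r ≤ aC * p) (h2 : aB * r ≤ q) (h3 : aC * s ≤ t) (h4 : s ≤ aD * q)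
    (i1 : q * (1 - aA) + r * (1 - aB) + p * (1 - aC) = 0)
    (i2 : t * (1 - aB) + s * (1 - aC) + q * (1 - aD) = 0) : False := by
  have m1 : 0 < t * (1 - aB) := mul_pos ht (by linarith)
  have m2 : 0 < q * (1 - aD) := mul_pos hq (by linarith)
  have hs : 0 < s := pos_of_mul_pos_left (b := aC - 1) (by linarith) (by linarith)
  have hC' : 0 < aC - 1 := pos_of_mul_pos_right (a := s) (by linarith) hs.le
  have m3 : 0 < p * (aC - 1) := mul_pos hp hC'
  have m4 : 0 ≤ q * (aA - 1) := mul_nonneg hq.le (by linarith)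
  have hr : 0 < r := pos_of_mul_pos_left (b := 1 - aB) (by linarith) (by linarith)
  have k1 : 0 ≤ r * (1 - aA * aB * aC) := by
    have u1 := mul_le_mul_of_nonneg_left h2 (mul_nonneg (by linarith : 0 ≤ aC)
      (by linarith : 0 ≤ aA - 1))
    have u2 := mul_le_mul_of_nonneg_right h1 hC'.le
    linear_combination u1 + u2 - aC * i1
  have k2 : 0 ≤ s * (aB * aC * aD - 1) := by
    have u1 := mul_le_mul_of_nonneg_left h3 (mul_nonneg hD0.le (by linarith : 0 ≤ 1 - aB))
    have u2 := mul_le_mul_of_nonneg_right h4 (by linarith : 0 ≤ 1 - aD)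
    linear_combination u1 + u2 + aD * i2
  have k1' := nonneg_of_mul_nonneg_right k1 hr
  have k2' := nonneg_of_mul_nonneg_right k2 hs
  have : 0 ≤ aB * aC := mul_nonneg hB0 (by linarith)
  nlinarith

end Algebra

/-! ### Sign changes and maximal blocks -/

section Changes

variable {ι : Type*} (g : ι → Bool)

/-- The number of sign changes in the list of signs `s, g l₀, g l₁, …`. -/
def chgFrom : Bool → List ι → ℕ
  | _, [] => 0
  | s, x :: l => (if g x = s then 0 else 1) + chgFrom (g x) l

/-- The number of sign changes in the list of signs `g l₀, g l₁, …`. -/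
def chg : List ι → ℕ
  | [] => 0
  | x :: l => chgFrom g (g x) l

/-- `X` is a nonempty block of constant sign `s`. -/
def Blk (s : Bool) (X : List ι) : Prop := X ≠ [] ∧ ∀ x ∈ X, g x = s

variable {g}

lemma chgFrom_uniform {s : Bool} {X : List ι} (h : ∀ x ∈ X, g x = s) (m : List ι) :
    chgFrom g s (X ++ m) = chgFrom g s m := by
  induction X with
  | nil => rfl
  | cons x X ih =>
    have hx : g x = s := h x (by simp)
    simp [chgFrom, hx, ih (fun y hy => h y (by simp [hy]))]

lemma chgFrom_blk {s t : Bool} {X : List ι} (h : Blk g t X) (m : List ι) :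
    chgFrom g s (X ++ m) = (if t = s then 0 else 1) + chgFrom g t m := by
  obtain ⟨h0, h⟩ := h
  cases X with
  | nil => exact absurd rfl h0
  | cons x X =>
    have hx : g x = t := h x (by simp)
    simp [chgFrom, hx, chgFrom_uniform (X := X) (fun y hy => h y (by simp [hy]))]

lemma chgFrom_last_blk {s t : Bool} {X : List ι} (h : Blk g t X) :
    chgFrom g s X = if t = s then 0 else 1 := by
  simpa [chgFrom] using chgFrom_blk (s := s) h []

lemma chg_blk {t : Bool} {X : List ι} (h : Blk g t X) (m : List ι) :
    chg g (X ++ m) = chgFrom g t m := by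
  obtain ⟨h0, h⟩ := h
  cases X with
  | nil => exact absurd rfl h0
  | cons x X =>
    have hx : g x = t := h x (by simp)
    simp [chg, hx, chgFrom_uniform (X := X) (fun y hy => h y (by simp [hy]))]

lemma chgFrom_snoc (s : Bool) (l : List ι) (x : ι) (m : List ι) :
    chgFrom g s (l ++ x :: m) = chgFrom g s (l ++ [x]) + chgFrom g (g x) m := by
  induction l generalizing s with
  | nil => simp [chgFrom]
  | cons y l ih => simp only [List.cons_append, chgFrom]; rw [ih]; ring

lemma chg_snoc (l : List ι) (x : ι) (m : List ι) :
    chg g (l ++ x :: m) = chg g (l ++ [x]) + chgFrom g (g x) m := by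
  cases l with
  | nil => simp [chg, chgFrom]
  | cons y l => simpa [chg] using chgFrom_snoc (g y) l x m

/-- `E` can precede a maximal block of sign `s`: it is empty or its last sign is not `s`. -/
def Stops (g : ι → Bool) (s : Bool) (E : List ι) : Prop :=
  E = [] ∨ ∃ E' x, E = E' ++ [x] ∧ g x = !s

/-- Every nonempty list splits off its last maximal block of constant sign. -/
lemma exists_last_block (l : List ι) (hl : l ≠ []) :
    ∃ E X s, l = E ++ X ∧ Blk g s X ∧ Stops g s E := by
  induction l with
  | nil => exact absurd rfl hl
  | cons x l ih =>
    by_cases h : l = []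
    · subst h
      exact ⟨[], [x], g x, rfl, ⟨by simp, by simp⟩, Or.inl rfl⟩
    · obtain ⟨E, X, s, rfl, hX, hE⟩ := ih h
      rcases hE with rfl | ⟨E', y, rfl, hy⟩
      · by_cases hx : g x = s
        · exact ⟨[], x :: X, s, rfl, ⟨by simp, by simpa [hx] using hX.2⟩, Or.inl rfl⟩
        · exact ⟨[x], X, s, rfl, hX, Or.inr ⟨[], x, rfl, by cases s <;> simp_all⟩⟩
      · exact ⟨x :: (E' ++ [y]), X, s, rfl, hX, Or.inr ⟨x :: E', y, rfl, hy⟩⟩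

/-- A nonempty `E` that can precede a maximal block of sign `s` itself ends in a maximal block of
the opposite sign. -/
lemma Stops.exists_block {s : Bool} {E : List ι} (h : Stops g s E) (hE : E ≠ []) :
    ∃ E' X, E = E' ++ X ∧ Blk g (!s) X ∧ Stops g (!s) E' := by
  obtain ⟨E', X, t, rfl, hX, hE'⟩ := exists_last_block (g := g) E hE
  have : t = !s := by
    rcases h with h | ⟨E'', x, h, hx⟩
    · exact absurd h hE
    · have hm : x ∈ X := by
        have := congrArg List.getLast? h
        rw [List.getLast?_append_of_ne_nil _ hX.1] at this
        exact List.mem_of_getLast? (by simpa using this)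
      rw [← hx, hX.2 x hm]
  subst this
  exact ⟨E', X, rfl, hX, hE'⟩

/-- A list with at least three sign changes ends in four maximal blocks of alternating signs. -/
lemma exists_four_blocks (l : List ι) (hl : 3 ≤ chg g l) :
    ∃ E A B C D s, l = E ++ (A ++ (B ++ (C ++ D))) ∧ Blk g s A ∧ Blk g (!s) B ∧ Blk g s C ∧
      Blk g (!s) D ∧ Stops g s E := by
  have h0 : l ≠ [] := by rintro rfl; simp [chg] at hl
  obtain ⟨E, D, s, rfl, hD, hE⟩ := exists_last_block (g := g) l h0
  have h1 : E ≠ [] := by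
    rintro rfl
    have := chg_blk hD []
    simp [chgFrom] at this
    simp [this] at hl
  obtain ⟨E, C, rfl, hC, hE⟩ := hE.exists_block h1
  have h2 : E ≠ [] := by
    rintro rfl
    have := chg_blk hC (D ++ [])
    rw [chgFrom_blk hD] at this
    simp [chgFrom] at this
    simp [this] at hl
  obtain ⟨E, B, rfl, hB, hE⟩ := hE.exists_block h2
  have h3 : E ≠ [] := by
    rintro rfl
    have := chg_blk hB (C ++ (D ++ []))
    rw [chgFrom_blk hC, chgFrom_blk hD] at this
    simp [chgFrom] at this
    simp [this] at hl
  obtain ⟨E, A, rfl, hA, hE⟩ := hE.exists_block h3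
  refine ⟨E, A, B, C, D, !s, by simp, ?_, ?_, hC, ?_, ?_⟩ <;> simp_all

section Exchange

variable {E A B C D : List ι} {s : Bool}

lemma chg_exchange_AB (hE : Stops g s E) (hA : Blk g s A) (hB : Blk g (!s) B) (hC : Blk g s C)
    (hD : Blk g (!s) D) :
    chg g (E ++ (B ++ (A ++ (C ++ D)))) < chg g (E ++ (A ++ (B ++ (C ++ D)))) := by
  rcases hE with rfl | ⟨E', x, rfl, hx⟩
  · rw [List.nil_append, List.nil_append, chg_blk hA, chg_blk hB]
    simp [chgFrom_blk hA, chgFrom_blk hB, chgFrom_blk hC, chgFrom_last_blk hD]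
  · simp only [List.append_assoc, List.singleton_append]
    rw [chg_snoc, chg_snoc E' x (A ++ _)]
    simp [chgFrom_blk hA, chgFrom_blk hB, chgFrom_blk hC, chgFrom_last_blk hD, hx]

lemma chg_exchange_BC (hE : Stops g s E) (hA : Blk g s A) (hB : Blk g (!s) B) (hC : Blk g s C)
    (hD : Blk g (!s) D) :
    chg g (E ++ (A ++ (C ++ (B ++ D)))) < chg g (E ++ (A ++ (B ++ (C ++ D)))) := by
  rcases hE with rfl | ⟨E', x, rfl, hx⟩
  · rw [List.nil_append, List.nil_append, chg_blk hA, chg_blk hA]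
    simp [chgFrom_blk hB, chgFrom_blk hC, chgFrom_last_blk hD]
  · simp only [List.append_assoc, List.singleton_append]
    rw [chg_snoc, chg_snoc E' x (A ++ (B ++ _))]
    simp [chgFrom_blk hA, chgFrom_blk hB, chgFrom_blk hC, chgFrom_last_blk hD, hx]

lemma chg_exchange_CD (hE : Stops g s E) (hA : Blk g s A) (hB : Blk g (!s) B) (hC : Blk g s C)
    (hD : Blk g (!s) D) :
    chg g (E ++ (A ++ (B ++ (D ++ C)))) < chg g (E ++ (A ++ (B ++ (C ++ D)))) := by
  rcases hE with rfl | ⟨E', x, rfl, hx⟩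
  · rw [List.nil_append, List.nil_append, chg_blk hA, chg_blk hA]
    simp [chgFrom_blk hB, chgFrom_blk hC, chgFrom_blk hD, chgFrom_last_blk hC,
      chgFrom_last_blk hD]
  · simp only [List.append_assoc, List.singleton_append]
    rw [chg_snoc, chg_snoc E' x (A ++ (B ++ (C ++ _)))]
    simp [chgFrom_blk hA, chgFrom_blk hB, chgFrom_blk hC, chgFrom_blk hD, chgFrom_last_blk hC,
      chgFrom_last_blk hD, hx]

end Exchange

open Classical in
/-- The sign changes of `l` at positions below `N` number at most `chg g l`. -/
lemma count_le_chg (l : List ι) (N : ℕ) :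
    Nat.count (fun j => ∃ x y, l[j]? = some x ∧ l[j + 1]? = some y ∧ g x ≠ g y) N ≤ chg g l := by
  induction l generalizing N with
  | nil => simp [Nat.count_eq_card_filter_range]
  | cons x l ih =>
    cases N with
    | zero => simp
    | succ N =>
      rw [Nat.count_succ']
      have := ih N
      cases l with
      | nil => simp [Nat.count_eq_card_filter_range]
      | cons y l =>
        simp only [List.getElem?_cons_succ, chg, chgFrom, List.getElem?_cons_zero,
          Option.some.injEq, Nat.zero_add] at this ⊢
        by_cases h : g x = g y
        · simp [h]
          simpa using this
        · simp [h, Ne.symm h]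
          rw [add_comm]
          simpa using this

end Changes

/-! ### Compositions along lists -/

section Lists

variable {ι : Type*} (a b : ι → ℝ)

/-- The value at `x` of the composition of the functions in the list, the head applied first. -/
def ev (l : List ι) (x : ℝ) : ℝ := l.foldl (fun x i => a i * x + b i) x

/-- The sign of a function: `true` if its slope is at least `1`. -/
noncomputable def sgn (i : ι) : Bool := decide (1 ≤ a i)

lemma ev_append (l m : List ι) (x : ℝ) : ev a b (l ++ m) x = ev a b m (ev a b l x) := by
  simp [ev]

variable {a b}

lemma ev_linear (l : List ι) : ∃ q, ∀ x, ev a b l x = (l.map a).prod * x + q := by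
  induction l with
  | nil => exact ⟨0, fun x => by simp [ev]⟩
  | cons i l ih =>
    obtain ⟨q, hq⟩ := ih
    refine ⟨(l.map a).prod * b i + q, fun x => ?_⟩
    have := hq (a i * x + b i)
    simp only [ev, List.foldl_cons, List.map_cons, List.prod_cons] at this ⊢
    rw [this]; ring

lemma prod_pos_block {l : List ι} (h : Blk (sgn a) true l) : 1 ≤ (l.map a).prod := by
  replace h := h.2
  induction l with
  | nil => simp
  | cons i l ih =>
    have hi : 1 ≤ a i := by simpa [sgn] using h i (by simp)
    have := ih (fun j hj => h j (by simp [hj]))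
    simp only [List.map_cons, List.prod_cons]
    exact one_le_mul_of_one_le_of_one_le hi this

lemma prod_nonneg_list (ha : ∀ i, 0 ≤ a i) (l : List ι) : 0 ≤ (l.map a).prod := by
  apply List.prod_nonneg
  simp only [List.mem_map]
  rintro _ ⟨i, -, rfl⟩
  exact ha i

lemma prod_neg_block (ha : ∀ i, 0 ≤ a i) {l : List ι} (h : Blk (sgn a) false l) :
    (l.map a).prod < 1 := by
  obtain ⟨h0, h⟩ := h
  have key : ∀ l : List ι, (∀ x ∈ l, sgn a x = false) → (l.map a).prod ≤ 1 := by
    intro l h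
    induction l with
    | nil => simp
    | cons i l ih =>
      have hi : a i < 1 := by simpa [sgn] using h i (by simp)
      simp only [List.map_cons, List.prod_cons]
      exact mul_le_one₀ hi.le (prod_nonneg_list ha l) (ih (fun j hj => h j (by simp [hj])))
  cases l with
  | nil => exact absurd rfl h0
  | cons i l =>
    have hi : a i < 1 := by simpa [sgn] using h i (by simp)
    simp only [List.map_cons, List.prod_cons]
    exact mul_lt_one_of_nonneg_of_lt_one_left (ha i) hi (key l (fun j hj => h j (by simp [hj])))

/-- An ordering which is optimal, and has the fewest sign changes among the optimal orderings, has
at most two sign changes. -/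
lemma chg_le_two_of_minimal (ha : ∀ i, 0 ≤ a i) (c : ℝ) (l : List ι)
    (hopt : ∀ m : List ι, m.Perm l → ev a b m c ≤ ev a b l c)
    (hmin : ∀ m : List ι, m.Perm l → chg (sgn a) m < chg (sgn a) l → ev a b m c < ev a b l c) :
    chg (sgn a) l ≤ 2 := by
  classical
  by_contra hlt
  obtain ⟨E, A, B, C, D, s, rfl, hA, hB, hC, hD, hE⟩ :=
    exists_four_blocks (g := sgn a) l (by omega)
  have h1 := hmin (E ++ (B ++ (A ++ (C ++ D))))
    (by rw [List.perm_iff_count]; intro; simp only [List.count_append]; omega)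
    (chg_exchange_AB hE hA hB hC hD)
  have h2 := hmin (E ++ (A ++ (C ++ (B ++ D))))
    (by rw [List.perm_iff_count]; intro; simp only [List.count_append]; omega)
    (chg_exchange_BC hE hA hB hC hD)
  have h3 := hmin (E ++ (A ++ (B ++ (D ++ C))))
    (by rw [List.perm_iff_count]; intro; simp only [List.count_append]; omega)
    (chg_exchange_CD hE hA hB hC hD)
  have h4 := hopt (E ++ (B ++ (C ++ (A ++ D))))
    (by rw [List.perm_iff_count]; intro; simp only [List.count_append]; omega)
  have h5 := hopt (E ++ (A ++ (C ++ (D ++ B))))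
    (by rw [List.perm_iff_count]; intro; simp only [List.count_append]; omega)
  have h6 := hopt (E ++ (C ++ (A ++ (B ++ D))))
    (by rw [List.perm_iff_count]; intro; simp only [List.count_append]; omega)
  have h7 := hopt (E ++ (A ++ (D ++ (B ++ C))))
    (by rw [List.perm_iff_count]; intro; simp only [List.count_append]; omega)
  obtain ⟨qA, eA⟩ := ev_linear (a := a) (b := b) A
  obtain ⟨qB, eB⟩ := ev_linear (a := a) (b := b) B
  obtain ⟨qC, eC⟩ := ev_linear (a := a) (b := b) C
  obtain ⟨qD, eD⟩ := ev_linear (a := a) (b := b) D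
  simp only [ev_append, eA, eB, eC, eD] at h1 h2 h3 h4 h5 h6 h7
  obtain ⟨p, q, r, s', t, hC0, hD0, hp, hq, ht, j1, j2, j3, j4, i1, i2⟩ :=
    core_facts (prod_nonneg_list ha C) (prod_nonneg_list ha D) h1 h2 h3 h4 h5 h6 h7
  cases s with
  | false =>
    exact core_neg (prod_nonneg_list ha A) (prod_neg_block ha hA) (prod_pos_block hB)
      (prod_neg_block ha hC) (prod_pos_block hD) hC0 hp hq ht j1 j2 j3 j4 i1 i2
  | true =>
    exact core_pos (prod_pos_block hA) (prod_nonneg_list ha B) (prod_neg_block ha hB)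
      (prod_pos_block hC) (prod_neg_block ha hD) hD0 hp hq ht j1 j2 j3 j4 i1 i2

/-- Some ordering of maximal value has at most two sign changes: among the maximal ones, take one
with the fewest sign changes. -/
lemma exists_optimal_list (ha : ∀ i, 0 ≤ a i) (c : ℝ) (l₀ : List ι) :
    ∃ l : List ι, l.Perm l₀ ∧ (∀ m : List ι, m.Perm l₀ → ev a b m c ≤ ev a b l c) ∧
      chg (sgn a) l ≤ 2 := by
  classical
  obtain ⟨l₁, hl₁, hmax⟩ := Finset.exists_max_image l₀.permutations.toFinset
    (fun l => ev a b l c) ⟨l₀, by simp⟩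
  simp only [List.mem_toFinset, List.mem_permutations] at hl₁ hmax
  obtain ⟨l, hl, hmin⟩ := Finset.exists_min_image
    (l₀.permutations.toFinset.filter fun l => ev a b l c = ev a b l₁ c)
    (fun l => chg (sgn a) l) ⟨l₁, by simp [hl₁]⟩
  simp only [Finset.mem_filter, List.mem_toFinset, List.mem_permutations] at hl hmin
  have hopt : ∀ m : List ι, m.Perm l₀ → ev a b m c ≤ ev a b l c := by
    intro m hm
    rw [hl.2]
    exact hmax m hm
  refine ⟨l, hl.1, hopt, chg_le_two_of_minimal (b := b) ha c l
    (fun m hm => hopt m (hm.trans hl.1)) fun m hm hlt => ?_⟩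
  have hm' := hm.trans hl.1
  refine lt_of_le_of_ne (hopt m hm') fun he => ?_
  exact absurd (hmin m ⟨hm', he.trans hl.2⟩) (by omega)

end Lists

/-- There is an optimal permutation for the maximum total composition ordering problem
for monotone nondecreasing non-identity linear functions such that at most two adjacent
positions have `δ(f_{σ(i)}) · δ(f_{σ(i+1)}) = -1`. -/
theorem stmt13 (n : ℕ) (c : ℝ) (a b : Fin n → ℝ) (ha : ∀ i, 0 ≤ a i)
    (hnid : ∀ i, (a i, b i) ≠ (1, 0)) :
    ∃ σ : Equiv.Perm (Fin n),
      (∀ τ : Equiv.Perm (Fin n),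
        compSeq (fun i x => a i * x + b i) τ n c ≤
          compSeq (fun i x => a i * x + b i) σ n c) ∧
      Nat.card {j : Fin n // ∃ h : j.val + 1 < n,
        del (a (σ j)) * del (a (σ ⟨j.val + 1, h⟩)) = -1} ≤ 2 := by
  classical
  obtain ⟨l, hl, hopt, hchg⟩ := exists_optimal_list (b := b) ha c (List.finRange n)
  have hlen : l.length = n := by simpa using hl.length_eq
  have hnd : l.Nodup := hl.nodup_iff.2 (List.nodup_finRange n)
  have hinj : Function.Injective (fun i : Fin n => l.get (i.cast hlen.symm)) := by
    intro i j hij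
    simpa using hnd.injective_get hij
  have hval : ∀ τ : Fin n → Fin n,
      compSeq (fun i x => a i * x + b i) τ n c = ev a b ((List.finRange n).map τ) c := by
    intro τ
    simp [compSeq, ev, List.take_of_length_le]
  have hmap : (List.finRange n).map
      (Equiv.ofBijective _ (Finite.injective_iff_bijective.1 hinj)) = l := by
    apply List.ext_getElem
    · simp [hlen]
    · intro i h1 h2
      simp
  refine ⟨Equiv.ofBijective _ (Finite.injective_iff_bijective.1 hinj), fun τ => ?_, ?_⟩
  · rw [hval, hval, hmap]
    exact hopt _ (Equiv.Perm.map_finRange_perm τ)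
  · refine le_trans ?_ ((count_le_chg (g := sgn a) l n).trans hchg)
    rw [Nat.count_eq_card_filter_range, ← Nat.card_eq_finsetCard]
    refine Nat.card_le_card_of_injective
      (fun j => ⟨j.1.1, ?_⟩) (fun j k hjk => ?_)
    · obtain ⟨⟨j, hj⟩, h, hd⟩ := j
      simp only [Finset.mem_filter, Finset.mem_range]
      have hj' : j + 1 < l.length := hlen.symm ▸ h
      refine ⟨hj, l[j], l[j + 1], by simp, by simp, fun he => ?_⟩
      simp only [Equiv.ofBijective_apply, List.get_eq_getElem, Fin.val_cast, del] at hd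
      simp only [sgn, decide_eq_decide] at he
      simp only [he] at hd
      split_ifs at hd <;> norm_num at hd
    · simp only [Subtype.mk.injEq] at hjk
      exact Subtype.ext (Fin.ext hjk)
end

section
/- Let f_i(x) = a_i x + b_i (i = 1, 2, 3) be monotone nondecreasing linear functions, none of which is the identity, with a_1, a_3 ≥ 1, 0 ≤ a_2 < 1, and a_1·a_2·a_3 ≥ 1. If γ(f_1) ≥ γ(f_2) ≥ γ(f_3), then for every x ∈ ℝ, f_3∘f_2∘f_1(x) ≤ max{ f_2∘f_1∘f_3(x), f_1∘f_3∘f_2(x) }. -/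
/-- If `γ(f) ≥ c` for `f(x) = a x + b` with `a ≥ 1`, then `f c ≤ c`. -/
lemma displacement_nonpos {a b c : ℝ} (ha : 1 ≤ a) (h : (c : EReal) ≤ gam a b) :
    a * c + b - c ≤ 0 := by
  unfold gam at h
  split_ifs at h with h1 h2
  · subst h1; linarith
  · exact absurd (le_bot_iff.mp h) (EReal.coe_ne_bot c)
  · have hlt : 1 < a := lt_of_le_of_ne ha (Ne.symm h1)
    rw [EReal.coe_le_coe_iff, le_div_iff_of_neg (by linarith)] at h
    linarith

/-- If `γ(f) ≤ c` for `f(x) = a x + b` with `a ≥ 1`, then `f c ≥ c`. -/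
lemma displacement_nonneg {a b c : ℝ} (ha : 1 ≤ a) (h : gam a b ≤ (c : EReal)) :
    0 ≤ a * c + b - c := by
  unfold gam at h
  split_ifs at h with h1 h2
  · exact absurd (top_le_iff.mp h) (EReal.coe_ne_top c)
  · subst h1; linarith
  · have hlt : 1 < a := lt_of_le_of_ne ha (Ne.symm h1)
    rw [EReal.coe_le_coe_iff, div_le_iff_of_neg (by linarith)] at h
    linarith

/-- In coordinates centred at the fixed point of `f₂`, the two inequalities cannot both fail. -/
lemma centered_false {a1 a2 a3 p q : ℝ} (ha1 : 1 ≤ a1) (ha3 : 1 ≤ a3) (ha2 : 0 ≤ a2)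
    (ha2' : a2 < 1) (hprod : 1 ≤ a1 * a2 * a3) (hp : 0 ≤ p) (hq : 0 ≤ q)
    (h1 : a2 * (a3 - 1) * p < (1 - a1 * a2) * q)
    (h2 : (a1 - 1) * q < (1 - a3 * a2) * p) : False := by
  have hB : 0 < 1 - a1 * a2 :=
    pos_of_mul_pos_left
      ((mul_nonneg (mul_nonneg ha2 (sub_nonneg.mpr ha3)) hp).trans_lt h1) hq
  have e1 := mul_lt_mul_of_pos_left h2 hB
  have e2 := mul_le_mul_of_nonneg_left h1.le (sub_nonneg.mpr ha1)
  have e3 : 0 ≤ (1 - a2) * (a1 * a2 * a3 - 1) * p :=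
    mul_nonneg (mul_nonneg (by linarith) (by linarith)) hp
  linarith

/-- For non-identity monotone linear `fᵢ(x) = aᵢx + bᵢ` with `a₁, a₃ ≥ 1`,
`0 ≤ a₂ < 1`, `a₁a₂a₃ ≥ 1` and `γ(f₁) ≥ γ(f₂) ≥ γ(f₃)`:
`f₃∘f₂∘f₁ ≤ max (f₂∘f₁∘f₃) (f₁∘f₃∘f₂)` pointwise. -/
theorem stmt14 (a1 b1 a2 b2 a3 b3 : ℝ)
    (ha1 : 1 ≤ a1) (ha3 : 1 ≤ a3) (ha2 : 0 ≤ a2) (ha2' : a2 < 1)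
    (hprod : 1 ≤ a1 * a2 * a3)
    (hn1 : (a1, b1) ≠ (1, 0)) (hn2 : (a2, b2) ≠ (1, 0)) (hn3 : (a3, b3) ≠ (1, 0))
    (h21 : gam a2 b2 ≤ gam a1 b1) (h32 : gam a3 b3 ≤ gam a2 b2) :
    ∀ x : ℝ,
      a3 * (a2 * (a1 * x + b1) + b2) + b3 ≤
        max (a2 * (a1 * (a3 * x + b3) + b1) + b2)
          (a1 * (a3 * (a2 * x + b2) + b3) + b1) := by
  intro x
  have hne : 1 - a2 ≠ 0 := by linarith
  have hg : gam a2 b2 = ((b2 / (1 - a2) : ℝ) : EReal) := by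
    unfold gam
    rw [if_neg ha2'.ne]
  rw [hg] at h21 h32
  set c := b2 / (1 - a2) with hc
  have hb2 : b2 = c * (1 - a2) := by rw [hc, div_mul_cancel₀ _ hne]
  have d1 := displacement_nonpos ha1 h21
  have d3 := displacement_nonneg ha3 h32
  by_contra! hcon
  obtain ⟨h1, h2⟩ := max_lt_iff.mp hcon
  rw [hb2] at h1 h2
  refine centered_false (p := -(a1 * c + b1 - c)) (q := a3 * c + b3 - c) ha1 ha3 ha2 ha2' hprod
    (by linarith) d3 ?_ ?_
  · linarith
  · linarith
end

section
/- Let c ∈ ℝ and let f_i(x) = a_i x + b_i (i ∈ [n]) be monotone nondecreasing linear functions, none of which is the identity (a_i ≥ 0 and (a_i, b_i) ≠ (1, 0)). If ∏_{i=1}^n a_i ≥ 1, then there exists a permutation σ of [n] that is optimal for the maximum total composition ordering problem ((f_i)_{i∈[n]}, c) and integers 0 ≤ s ≤ t ≤ n such that δ(f_{σ(i)}) = −1 for all i ∈ {1,…,s} ∪ {t+1,…,n}, δ(f_{σ(i)}) = +1 for all i ∈ {s+1,…,t}, γ(f_{σ(t+1)}) ≤ ⋯ ≤ γ(f_{σ(n)})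 ≤ γ(f_{σ(1)}) ≤ ⋯ ≤ γ(f_{σ(s)}), and γ(f_{σ(s+1)}) ≤ ⋯ ≤ γ(f_{σ(t)}). -/
/-! ### Compositions along lists -/

/-- Value at `0` of the composition of the maps `x ↦ a i * x + b i` along `l` (head first). -/
def cb {ι : Type*} (a b : ι → ℝ) (l : List ι) : ℝ :=
  l.foldl (fun x i => a i * x + b i) 0

/-- Slope of the composition of the maps `x ↦ a i * x + b i` along `l`. -/
def ca {ι : Type*} (a : ι → ℝ) (l : List ι) : ℝ := (l.map a).prod

/-- Cross product of the vectors `(1 - A, B)` of the compositions along `S` and along `T`. -/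
def cr {ι : Type*} (a b : ι → ℝ) (S T : List ι) : ℝ :=
  (1 - ca a S) * cb a b T - cb a b S * (1 - ca a T)

/-- `l` maximizes the composition at `0` among its rearrangements. The slope is the same for all
rearrangements, so the starting point does not matter. -/
def Opt {ι : Type*} (a b : ι → ℝ) (l : List ι) : Prop :=
  ∀ l' : List ι, l'.Perm l → cb a b l' ≤ cb a b l

/-- Position class relative to a cut `g`: the contracting maps with `γ > g` (class `0`), then the
maps with slope at least `1` (class `1`), then the contracting maps with `γ ≤ g` (class `2`). -/
noncomputable def cls {ι : Type*} (a b : ι → ℝ) (g : EReal) (i : ι) : ℕ :=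
  if 1 ≤ a i then 1 else if gam (a i) (b i) ≤ g then 2 else 0

/-- Sorting key: first the class, then `γ`. -/
noncomputable def key {ι : Type*} (a b : ι → ℝ) (g : EReal) (i : ι) : ℕ ×ₗ EReal :=
  toLex (cls a b g i, gam (a i) (b i))

section Lists

variable {ι : Type*} {a b : ι → ℝ}

lemma foldl_eq (l : List ι) (c : ℝ) :
    l.foldl (fun x i => a i * x + b i) c = ca a l * c + cb a b l := by
  induction l generalizing c with
  | nil => simp [ca, cb]
  | cons i l ih =>
    have h0 := ih (b i)
    simp only [ca, cb, List.foldl_cons, List.map_cons, List.prod_cons, mul_zero, zero_add] at *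
    rw [ih, h0]; ring

lemma ca_append (S T : List ι) : ca a (S ++ T) = ca a S * ca a T := by
  simp [ca]

lemma cb_append (S T : List ι) : cb a b (S ++ T) = ca a T * cb a b S + cb a b T := by
  rw [← foldl_eq, cb, List.foldl_append]; rfl

lemma ca_singleton (i : ι) : ca a [i] = a i := by simp [ca]

lemma cb_singleton (i : ι) : cb a b [i] = b i := by simp [cb]

lemma ca_perm {l l' : List ι} (h : l.Perm l') : ca a l = ca a l' :=
  (h.map a).prod_eq

lemma ca_pos (ha : ∀ i, 0 < a i) (l : List ι) : 0 < ca a l :=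
  List.prod_pos (by simpa using fun i _ => ha i)

lemma perm_swap (P S T Q : List ι) :
    (P ++ (T ++ (S ++ Q))).Perm (P ++ (S ++ (T ++ Q))) := by
  refine List.Perm.append_left P ?_
  rw [← List.append_assoc, ← List.append_assoc]
  exact List.perm_append_comm.append_right Q

lemma cb_swap (P S T Q : List ι) :
    cb a b (P ++ (S ++ (T ++ Q))) - cb a b (P ++ (T ++ (S ++ Q))) = ca a Q * cr a b S T := by
  simp only [cb_append, ca_append, cr]; ring

lemma Opt.cr_nonneg (ha : ∀ i, 0 < a i) {P S T Q : List ι}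
    (h : Opt a b (P ++ (S ++ (T ++ Q)))) : 0 ≤ cr a b S T := by
  have h1 := h _ (perm_swap P S T Q)
  have h2 := cb_swap (a := a) (b := b) P S T Q
  have h3 := ca_pos ha Q
  by_contra hc
  nlinarith [mul_pos h3 (by linarith : 0 < -cr a b S T)]

lemma Opt.of_eq {l l' : List ι} (h : Opt a b l) (hp : l'.Perm l)
    (he : cb a b l' = cb a b l) : Opt a b l' :=
  fun m hm => he ▸ h m (hm.trans hp)

lemma Opt.swap {P S T Q : List ι} (h : Opt a b (P ++ (S ++ (T ++ Q))))
    (h0 : cr a b S T = 0) : Opt a b (P ++ (T ++ (S ++ Q))) := by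
  refine h.of_eq (perm_swap P S T Q) ?_
  have h2 := cb_swap (a := a) (b := b) P S T Q
  rw [h0, mul_zero] at h2
  linarith

/-! ### Angles, slopes and the sorting key -/

/-- For two maps on the same side of slope `1`, a decrease of `γ` is a clockwise turn. -/
lemma turn_nonpos {a₁ b₁ a₂ b₂ : ℝ} (h : (1 ≤ a₁ ∧ 1 ≤ a₂) ∨ (a₁ < 1 ∧ a₂ < 1))
    (hg : gam a₂ b₂ < gam a₁ b₁) : (1 - a₁) * b₂ - b₁ * (1 - a₂) ≤ 0 := by
  unfold gam at hg
  by_cases h2 : a₂ = 1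
  · have h1 : 1 ≤ a₁ := by rcases h with h | h <;> linarith [h.1, h.2]
    have hb : 0 ≤ b₂ := by
      by_contra hb
      simp [h2, not_le.1 hb] at hg
    subst h2
    nlinarith
  · by_cases h1 : a₁ = 1
    · have h2' : 1 ≤ a₂ := by rcases h with h | h <;> linarith [h.1, h.2]
      have hb : b₁ < 0 := by
        by_contra hb
        simp [h1, hb] at hg
      subst h1
      nlinarith
    · rw [if_neg h1, if_neg h2, EReal.coe_lt_coe_iff] at hg
      have hpos : 0 < (1 - a₁) * (1 - a₂) := by
        rcases h with ⟨h, h'⟩ | ⟨h, h'⟩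
        · exact mul_pos_of_neg_of_neg (sub_neg.2 (lt_of_le_of_ne h (Ne.symm h1)))
            (sub_neg.2 (lt_of_le_of_ne h' (Ne.symm h2)))
        · exact mul_pos (sub_pos.2 h) (sub_pos.2 h')
      have e1 : b₁ = b₁ / (1 - a₁) * (1 - a₁) :=
        (div_mul_cancel₀ _ (sub_ne_zero.2 (Ne.symm h1))).symm
      have e2 : b₂ = b₂ / (1 - a₂) * (1 - a₂) :=
        (div_mul_cancel₀ _ (sub_ne_zero.2 (Ne.symm h2))).symm
      generalize b₁ / (1 - a₁) = r₁ at *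
      generalize b₂ / (1 - a₂) = r₂ at *
      rw [e1, e2]
      nlinarith [mul_pos hpos (sub_pos.2 hg)]

/-- A contracting map has `γ` at most that of a map `x ↦ A x + B`, `A ≥ 1`, iff its vector does
not lie strictly clockwise of the vector `(1 - A, B)`. -/
lemma gam_le_iff {a₁ b₁ A B : ℝ} (h1 : a₁ < 1) (hA : 1 ≤ A) (hV : ¬ (A = 1 ∧ B = 0)) :
    gam a₁ b₁ ≤ gam A B ↔ (1 - a₁) * B - b₁ * (1 - A) ≤ 0 := by
  have hx : 0 < 1 - a₁ := by linarith
  unfold gam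
  rw [if_neg h1.ne]
  split_ifs with hA1 hB
  · subst hA1
    simp only [le_top, sub_self, mul_zero, sub_zero, true_iff]
    nlinarith
  · subst hA1
    have : 0 < B := lt_of_le_of_ne (not_lt.1 hB) (fun h => hV ⟨rfl, h.symm⟩)
    simp only [le_bot_iff, EReal.coe_ne_bot, sub_self, mul_zero, sub_zero, false_iff, not_le]
    positivity
  · have hA2 : 0 < A - 1 := by
      have := lt_of_le_of_ne hA (Ne.symm hA1)
      linarith
    have e : B / (1 - A) = (-B) / (A - 1) := by
      rw [← neg_sub A 1, div_neg, neg_div]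
    rw [EReal.coe_le_coe_iff, e, div_le_div_iff₀ hx hA2]
    constructor <;> intro h <;> linarith

/-! ### Lexicographically minimal optimal orders -/

/-- Among the optimal rearrangements there is one whose list of keys is lexicographically least. -/
lemma exists_lex_min {α : Type*} [LinearOrder α] (k : ι → α) (l₀ : List ι) (h₀ : Opt a b l₀) :
    ∃ l : List ι, l.Perm l₀ ∧ Opt a b l ∧
      ∀ l' : List ι, l'.Perm l → Opt a b l' → ¬ l'.map k < l.map k := by
  classical
  obtain ⟨l, hl, hmin⟩ := Finset.exists_min_image
    (l₀.permutations.toFinset.filter (fun l => Opt a b l)) (fun l => l.map k)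
    ⟨l₀, by simp [h₀]⟩
  simp only [Finset.mem_filter, List.mem_toFinset, List.mem_permutations] at hl hmin
  exact ⟨l, hl.1, hl.2, fun l' hp ho => not_lt.2 (hmin l' ⟨hp.trans hl.1, ho⟩)⟩

lemma exists_opt (l₀ : List ι) : ∃ l : List ι, l.Perm l₀ ∧ Opt a b l := by
  classical
  obtain ⟨l, hl, hmax⟩ := Finset.exists_max_image l₀.permutations.toFinset (fun l => cb a b l)
    ⟨l₀, by simp⟩
  simp only [List.mem_toFinset, List.mem_permutations] at hl hmax
  exact ⟨l, hl, fun l' hp => hmax l' (hp.trans hl)⟩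

lemma lex_front {α : Type*} [LinearOrder α] (w u : α) (p q q' : List α)
    (hp : ∀ x ∈ p, w ≤ x) (hu : w < u) : w :: (p ++ q) < p ++ u :: q' := by
  induction p with
  | nil => exact List.cons_lt_cons_iff.2 (Or.inl hu)
  | cons x p ih =>
    rcases (hp x (by simp)).lt_or_eq with h | h
    · exact List.cons_lt_cons_iff.2 (Or.inl h)
    · subst h
      exact List.cons_lt_cons_iff.2 (Or.inr ⟨rfl, ih fun y hy => hp y (by simp [hy])⟩)

/-- A list is sorted as soon as no two neighbours are inverted. -/
lemma pairwise_of_adj {α : Type*} [LinearOrder α] (k : ι → α) (l : List ι)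
    (h : ∀ p u w q, l = p ++ u :: w :: q → k u ≤ k w) :
    l.Pairwise (fun i j => k i ≤ k j) := by
  have : IsTrans ι (fun i j => k i ≤ k j) := ⟨fun _ _ _ => le_trans⟩
  rw [← List.isChain_iff_pairwise, List.isChain_iff_forall_rel_of_append_cons_cons]
  intro u w p q e
  exact h p u w q e

/-- The Plücker relation between the cross products of four plane vectors `u`, `w`, `t`, `v`. -/
lemma pluecker (ux uy wx wy tx ty vx vy : ℝ) :
    (ux * wy - uy * wx) * (vx * ty - vy * tx) - (ux * vy - uy * vx) * (wx * ty - wy * tx)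
      + (ux * ty - uy * tx) * (wx * vy - wy * vx) = 0 := by ring

/-- An optimal order with slope at least `1` which is not the identity can be sorted by key, the
cut being the fixed point of the whole composition. -/
lemma sort_of_ne (ha : ∀ i, 0 < a i) (l₀ : List ι) (h₀ : Opt a b l₀) (hA : 1 ≤ ca a l₀) (hV : ¬ (ca a l₀ = 1 ∧ cb a b l₀ = 0)) :
    ∃ l : List ι, l.Perm l₀ ∧ Opt a b l ∧
      l.Pairwise (fun i j => key a b (gam (ca a l₀) (cb a b l₀)) i ≤
        key a b (gam (ca a l₀) (cb a b l₀)) j) := by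
  obtain ⟨l, hl, hopt, hmin⟩ := exists_lex_min (key a b (gam (ca a l₀) (cb a b l₀))) l₀ h₀
  refine ⟨l, hl, hopt, pairwise_of_adj _ _ ?_⟩
  have hAeq : ca a l₀ = ca a l := ca_perm hl.symm
  have hBeq : cb a b l₀ = cb a b l := le_antisymm (hopt _ hl.symm) (h₀ _ hl)
  rw [hAeq, hBeq] at hmin ⊢
  rw [hAeq] at hA
  rw [hAeq, hBeq] at hV
  intro p u w q hlist
  by_contra hkey
  rw [not_le] at hkey
  set g := gam (ca a l) (cb a b l) with hg
  set vx := 1 - ca a l with hvx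
  set vy := cb a b l with hvy
  have hvx0 : vx ≤ 0 := by linarith
  -- Three exchanges, each producing a lexicographically smaller list of keys; minimality of `l`
  -- forbids them from preserving the value.
  have swap_uw : cr a b [u] [w] ≠ 0 := by
    intro h
    have e : l = p ++ ([u] ++ ([w] ++ q)) := by simpa using hlist
    have ho : Opt a b (p ++ ([w] ++ ([u] ++ q))) := Opt.swap (e ▸ hopt) h
    refine hmin _ ?_ ho ?_
    · rw [e]; exact perm_swap _ _ _ _
    · rw [e]
      simp only [List.map_append, List.map_cons, List.map_nil]
      exact List.append_left_lt (List.cons_lt_cons_iff.2 (Or.inl hkey))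
  have swap_uT : cr a b [u] (w :: q) ≠ 0 := by
    intro h
    have e : l = p ++ ([u] ++ ((w :: q) ++ [])) := by simpa using hlist
    have ho : Opt a b (p ++ ((w :: q) ++ ([u] ++ []))) := Opt.swap (e ▸ hopt) h
    refine hmin _ ?_ ho ?_
    · rw [e]; exact perm_swap _ _ _ _
    · rw [e]
      simp only [List.map_append, List.map_cons, List.map_nil]
      exact List.append_left_lt (List.cons_lt_cons_iff.2 (Or.inl hkey))
  have swap_Sw : (∀ i, key a b g w ≤ key a b g i) → cr a b (p ++ [u]) [w] ≠ 0 := by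
    intro hw h
    have e : l = [] ++ ((p ++ [u]) ++ ([w] ++ q)) := by simpa using hlist
    have ho : Opt a b ([] ++ ([w] ++ ((p ++ [u]) ++ q))) := Opt.swap (e ▸ hopt) h
    refine hmin _ ?_ ho ?_
    · rw [e]; exact perm_swap _ _ _ _
    · rw [e]
      simp only [List.map_append, List.map_cons, List.nil_append, List.append_assoc,
        List.cons_append]
      exact lex_front _ _ _ _ _ (by simpa using fun i _ => hw i) hkey
  -- By optimality every block turns counterclockwise into the block after it.
  have n_uw : 0 ≤ cr a b [u] [w] := by
    have e : l = p ++ ([u] ++ ([w] ++ q)) := by simpa using hlist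
    exact Opt.cr_nonneg ha (e ▸ hopt)
  have n_uT : 0 ≤ cr a b [u] (w :: q) := by
    have e : l = p ++ ([u] ++ ((w :: q) ++ [])) := by simpa using hlist
    exact Opt.cr_nonneg ha (e ▸ hopt)
  have n_wq : 0 ≤ cr a b [w] q := by
    have e : l = (p ++ [u]) ++ ([w] ++ (q ++ [])) := by simpa using hlist
    exact Opt.cr_nonneg ha (e ▸ hopt)
  have n_Sw : 0 ≤ cr a b (p ++ [u]) [w] := by
    have e : l = [] ++ ((p ++ [u]) ++ ([w] ++ q)) := by simpa using hlist
    exact Opt.cr_nonneg ha (e ▸ hopt)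
  have n_ST : 0 ≤ cr a b (p ++ [u]) (w :: q) := by
    have e : l = [] ++ ((p ++ [u]) ++ ((w :: q) ++ [])) := by simpa using hlist
    exact Opt.cr_nonneg ha (e ▸ hopt)
  have n_wT : 0 ≤ cr a b [w] (w :: q) := by
    have : cr a b [w] (w :: q) = cr a b [w] q := by
      have e1 := ca_append (a := a) [w] q
      have e2 := cb_append (a := a) (b := b) [w] q
      rw [List.singleton_append] at e1 e2
      simp only [cr, e1, e2]; ring
    rwa [this]
  have eST : l = (p ++ [u]) ++ (w :: q) := by simpa using hlist
  have n_VT : 0 ≤ vx * cb a b (w :: q) - vy * (1 - ca a (w :: q)) := by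
    have : vx * cb a b (w :: q) - vy * (1 - ca a (w :: q))
        = ca a (w :: q) * cr a b (p ++ [u]) (w :: q) := by
      rw [hvx, hvy, eST]; simp only [cr, ca_append (p ++ [u]), cb_append (p ++ [u])]; ring
    rw [this]; exact mul_nonneg (ca_pos ha _).le n_ST
  have n_SV : 0 ≤ (1 - ca a (p ++ [u])) * vy - cb a b (p ++ [u]) * vx := by
    have : (1 - ca a (p ++ [u])) * vy - cb a b (p ++ [u]) * vx
        = cr a b (p ++ [u]) (w :: q) := by
      rw [hvx, hvy, eST]; simp only [cr, ca_append (p ++ [u]), cb_append (p ++ [u])]; ring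
    rw [this]; exact n_ST
  clear_value vx vy
  -- If `u` is not to the right of the total vector `V` but `w` is, all terms of the Plücker relation
  -- for `u`, `w`, the tail `T` and `V` are nonnegative, so `u` may be moved past `T` for free.
  have key1 : (1 - a u) * vy - b u * vx ≤ 0 → (1 - a w) * vy - b w * vx ≤ 0 := by
    intro hu
    by_contra hw
    rw [not_le] at hw
    apply swap_uT
    have hpl := pluecker (1 - a u) (b u) (1 - a w) (b w) (1 - ca a (w :: q)) (cb a b (w :: q)) vx vy
    simp only [cr, ca_singleton, cb_singleton] at n_uw n_uT n_wT ⊢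
    have t1 := mul_nonneg n_uw n_VT
    have t2 := mul_nonneg (neg_nonneg.2 hu) n_wT
    have t3 := mul_nonneg n_uT hw.le
    have : ((1 - a u) * cb a b (w :: q) - b u * (1 - ca a (w :: q))) *
      ((1 - a w) * vy - b w * vx) = 0 := by linarith
    exact (mul_eq_zero.1 this).resolve_right hw.ne'
  have gle : ∀ i, a i < 1 → (gam (a i) (b i) ≤ g ↔ (1 - a i) * vy - b i * vx ≤ 0) := by
    intro i hi
    rw [hg, gam_le_iff hi hA hV, hvx, hvy]
  have tie : (1 - a u) * b w - b u * (1 - a w) ≤ 0 → False := by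
    intro h
    apply swap_uw
    simp only [cr, ca_singleton, cb_singleton] at n_uw ⊢
    linarith
  simp only [cr, ca_singleton, cb_singleton] at n_uw
  have hid : (1 - a u) * ((1 - a w) * vy - b w * vx) + (1 - a w) * (vx * b u - vy * (1 - a u))
    + vx * ((1 - a u) * b w - b u * (1 - a w)) = 0 := by ring
  rw [key, key, Prod.Lex.toLex_lt_toLex] at hkey
  simp only at hkey
  unfold cls at hkey
  by_cases hu1 : 1 ≤ a u <;> by_cases hw1 : 1 ≤ a w
  · simp only [hu1, hw1, if_true, lt_irrefl, true_and, false_or] at hkey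
    exact tie (turn_nonpos (Or.inl ⟨hu1, hw1⟩) hkey)
  · rw [not_le] at hw1
    have hw2 : 0 < (1 - a w) * vy - b w * vx := by
      by_contra hw2
      rw [not_lt, ← gle w hw1] at hw2
      simp [hu1, not_le.2 hw1, hw2] at hkey
    have hu2 : 0 < (1 - a u) * vy - b u * vx := by
      by_contra hu2
      exact absurd (key1 (not_lt.1 hu2)) (not_le.2 hw2)
    have t1 := mul_nonneg (sub_nonneg.2 hu1) hw2.le
    have t2 := mul_pos (sub_pos.2 hw1) hu2
    have t3 := mul_nonneg (neg_nonneg.2 hvx0) n_uw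
    nlinarith
  · rw [not_le] at hu1
    have hu2 : (1 - a u) * vy - b u * vx ≤ 0 := by
      by_contra hu2
      rw [← gle u hu1] at hu2
      simp [hw1, not_le.2 hu1, hu2] at hkey
    have hw2 := key1 hu2
    have t1 := mul_nonneg (sub_pos.2 hu1).le (neg_nonneg.2 hw2)
    have t2 := mul_nonneg (sub_nonneg.2 hw1) (neg_nonneg.2 hu2)
    have t3 := mul_nonneg (neg_nonneg.2 hvx0) n_uw
    rcases hvx0.lt_or_eq with hneg | hzero
    · have : vx * ((1 - a u) * b w - b u * (1 - a w)) = 0 := by nlinarith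
      exact tie ((mul_eq_zero.1 this).resolve_left hneg.ne).le
    · -- the cut is vertical, and `w` points along it: `w` can be moved to the very front
      have hux : 0 < 1 - a u := sub_pos.2 hu1
      have hA1 : ca a l = 1 := by linarith
      have hvy0 : vy ≠ 0 := fun h => hV ⟨hA1, h⟩
      have hvneg : vy < 0 := by
        rcases hvy0.lt_or_gt with h | h
        · exact h
        · rw [hzero] at hu2; nlinarith [mul_pos hux h]
      have hw0 : a w = 1 := by
        rw [hzero] at hw2; nlinarith
      have hbw : 0 ≤ b w := by
        rw [hw0] at n_uw
        by_contra hc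
        nlinarith [mul_pos hux (by linarith : 0 < -b w)]
      have hgw : gam (a w) (b w) = ⊥ := by simp [gam, hw0, hbw.not_gt]
      have hgt : g = ⊤ := by rw [hg]; simp [gam, hA1, hvneg]
      refine swap_Sw (fun i => ?_) ?_
      · rw [key, key, Prod.Lex.toLex_le_toLex, hgw, hgt]
        simp only [cls, hw0, le_refl, if_true, le_top, bot_le, and_true]
        split_ifs <;> simp
      · simp only [cr, ca_singleton, cb_singleton, hw0] at n_Sw ⊢
        rw [hzero] at n_SV
        have : (1 - ca a (p ++ [u])) ≤ 0 := by
          by_contra hc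
          nlinarith [mul_pos (not_le.1 hc) (neg_pos.2 hvneg)]
        nlinarith [mul_nonneg (neg_nonneg.2 this) hbw]
  · rw [not_le] at hu1 hw1
    simp only [not_le.2 hu1, not_le.2 hw1, if_false] at hkey
    by_cases hgu : gam (a u) (b u) ≤ g <;> by_cases hgw : gam (a w) (b w) ≤ g
    · simp only [hgu, hgw, if_true, lt_irrefl, true_and, false_or] at hkey
      exact tie (turn_nonpos (Or.inr ⟨hu1, hw1⟩) hkey)
    · exact hgw ((gle w hw1).2 (key1 ((gle u hu1).1 hgu)))
    · simp [hgu, hgw] at hkey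
    · simp only [hgu, hgw, if_false, lt_irrefl, true_and, false_or] at hkey
      exact tie (turn_nonpos (Or.inr ⟨hu1, hw1⟩) hkey)

/-- Every finite family with slopes of product at least `1` has an optimal order sorted by key. -/
lemma exists_sorted (ha : ∀ i, 0 < a i) (l₁ : List ι) (hA : 1 ≤ ca a l₁) :
    ∃ (l : List ι) (g : EReal), l.Perm l₁ ∧ Opt a b l ∧
      l.Pairwise (fun i j => key a b g i ≤ key a b g j) := by
  obtain ⟨l₀, hp₀, h₀⟩ := exists_opt (a := a) (b := b) l₁
  rw [← ca_perm hp₀] at hA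
  by_cases hV : ca a l₀ = 1 ∧ cb a b l₀ = 0
  · obtain ⟨hA1, hB0⟩ := hV
    by_cases hm : ∃ m ∈ l₀, a m < 1
    · -- rotate the identity so that a contracting map comes last, and sort the rest
      obtain ⟨m, hm, ham⟩ := hm
      obtain ⟨P, Q, rfl⟩ := List.append_of_mem hm
      have hperm : ((Q ++ P) ++ [m]).Perm (P ++ m :: Q) := by
        have : (Q ++ (P ++ [m])).Perm ((P ++ [m]) ++ Q) := List.perm_append_comm
        simpa using this
      have eB : cb a b ((Q ++ P) ++ [m]) = 0 := by
        have e1 : P ++ m :: Q = (P ++ [m]) ++ Q := by simp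
        rw [e1, ca_append] at hA1
        rw [e1, cb_append] at hB0
        rw [List.append_assoc, cb_append Q (P ++ [m])]
        linear_combination ca a (P ++ [m]) * hB0 - cb a b (P ++ [m]) * hA1
      have eA : ca a ((Q ++ P) ++ [m]) = 1 := by rw [ca_perm hperm, hA1]
      have hopt : Opt a b ((Q ++ P) ++ [m]) := h₀.of_eq hperm (by rw [eB, hB0])
      have hopt0 : Opt a b (Q ++ P) := by
        intro l' hl'
        have := hopt (l' ++ [m]) (hl'.append_right [m])
        rw [cb_append l', cb_append (Q ++ P)] at this
        have hpos := ca_pos ha [m]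
        nlinarith
      rw [ca_append (Q ++ P), ca_singleton] at eA
      rw [cb_append (Q ++ P), ca_singleton, cb_singleton] at eB
      have hm0 := ha m
      have hA0 : 1 < ca a (Q ++ P) := by
        by_contra hc
        nlinarith [mul_le_mul_of_nonneg_right (not_lt.1 hc) hm0.le]
      have hg : gam (ca a (Q ++ P)) (cb a b (Q ++ P)) = gam (a m) (b m) := by
        rw [gam, gam, if_neg hA0.ne', if_neg ham.ne, EReal.coe_eq_coe_iff,
          div_eq_div_iff (by linarith) (by linarith)]
        linear_combination (ca a (Q ++ P) - 1) * eB - cb a b (Q ++ P) * eA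
      obtain ⟨l, hl, hlo, hs⟩ := sort_of_ne ha (Q ++ P) hopt0 hA0.le (fun h => hA0.ne' h.1)
      rw [hg] at hs
      have hBl : cb a b l = cb a b (Q ++ P) := le_antisymm (hopt0 _ hl) (hlo _ hl.symm)
      refine ⟨l ++ [m], gam (a m) (b m), (hl.append_right [m]).trans (hperm.trans hp₀),
        hopt.of_eq (hl.append_right [m]) ?_, ?_⟩
      · rw [cb_append l, cb_append (Q ++ P), hBl]
      · refine List.pairwise_append.2 ⟨hs, List.pairwise_singleton _ _, ?_⟩
        intro i _ j hj
        rw [List.mem_singleton] at hj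
        subst hj
        rw [key, key, Prod.Lex.toLex_le_toLex]
        simp only [cls, not_le.2 ham, le_refl, if_true, if_false]
        split_ifs with h1 h2
        · simp
        · simp [h2]
        · simp
    · -- All slopes are `1`, so the maps commute.
      push Not at hm
      have hone : ∀ i ∈ l₀, a i = 1 := by
        intro i hi
        obtain ⟨P, Q, rfl⟩ := List.append_of_mem hi
        have e1 : P ++ i :: Q = P ++ ([i] ++ Q) := by simp
        rw [e1, ca_append, ca_append, ca_singleton] at hA1
        have hge : ∀ L : List ι, (∀ j ∈ L, 1 ≤ a j) → 1 ≤ ca a L := by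
          intro L hL
          induction L with
          | nil => simp [ca]
          | cons x L ih =>
            have h1 := hL x (by simp)
            have h2 := ih fun j hj => hL j (by simp [hj])
            have : ca a (x :: L) = a x * ca a L := by simp [ca]
            rw [this]; nlinarith
        have h1 := hge P fun j hj => hm j (by simp [hj])
        have h2 := hge Q fun j hj => hm j (by simp [hj])
        have h3 := hm i hi
        have h4 : a i ≤ a i * ca a Q := by nlinarith
        have h5 : a i * ca a Q ≤ ca a P * (a i * ca a Q) := by nlinarith
        linarith
      obtain ⟨l, hl, hopt, hmin⟩ := exists_lex_min (key a b ⊥) l₀ h₀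
      refine ⟨l, ⊥, hl.trans hp₀, hopt, pairwise_of_adj _ _ ?_⟩
      intro p u w q e
      by_contra hkey
      rw [not_le] at hkey
      have e' : l = p ++ ([u] ++ ([w] ++ q)) := by simpa using e
      have hu : a u = 1 := hone u (hl.subset (by simp [e]))
      have hw : a w = 1 := hone w (hl.subset (by simp [e]))
      have h0 : cr a b [u] [w] = 0 := by simp [cr, ca_singleton, hu, hw]
      have ho : Opt a b (p ++ ([w] ++ ([u] ++ q))) := Opt.swap (e' ▸ hopt) h0
      refine hmin _ ?_ ho ?_
      · rw [e']; exact perm_swap _ _ _ _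
      · rw [e']
        simp only [List.map_append, List.map_cons, List.map_nil]
        exact List.append_left_lt (List.cons_lt_cons_iff.2 (Or.inl hkey))
  · obtain ⟨l, hl, hlo, hs⟩ := sort_of_ne ha l₀ h₀ hA hV
    exact ⟨l, _, hl.trans hp₀, hlo, hs⟩

end Lists

/-- A sublevel set of a monotone function on `Fin n` is an initial segment. -/
lemma exists_cut {n : ℕ} (c : Fin n → ℕ) (hc : Monotone c) (k : ℕ) :
    ∃ s ≤ n, ∀ i : Fin n, i.val < s ↔ c i < k := by
  classical
  by_cases h : ∃ m, ∃ hm : m < n, k ≤ c ⟨m, hm⟩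
  · obtain ⟨hm, hk⟩ := Nat.find_spec h
    refine ⟨Nat.find h, hm.le, fun i => ⟨fun hi => ?_, fun hi => ?_⟩⟩
    · by_contra hc'
      exact Nat.find_min h hi ⟨i.2, not_lt.1 hc'⟩
    · by_contra hi'
      have : c ⟨Nat.find h, hm⟩ ≤ c i := hc (Fin.le_def.2 (not_lt.1 hi'))
      omega
  · push Not at h
    exact ⟨n, le_rfl, fun i => ⟨fun _ => h i.1 i.2, fun _ => i.2⟩⟩

/-! ### The permutation -/

/-- If `∏ aᵢ ≥ 1`, there is an optimal permutation `σ` (0-indexed positions) and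
`0 ≤ s ≤ t ≤ n` with `δ = -1` on positions `[0, s) ∪ [t, n)`, `δ = +1` on `[s, t)`,
`γ` nondecreasing along positions `t, …, n-1, 0, …, s-1`, and `γ` nondecreasing
along positions `s, …, t-1`. -/
theorem stmt16 (n : ℕ) (c : ℝ) (a b : Fin n → ℝ) (ha : ∀ i, 0 ≤ a i)
    (hnid : ∀ i, (a i, b i) ≠ (1, 0)) (hprod : 1 ≤ ∏ i, a i) :
    ∃ (σ : Equiv.Perm (Fin n)) (s t : ℕ), s ≤ t ∧ t ≤ n ∧
      (∀ τ : Equiv.Perm (Fin n),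
        compSeq (fun i x => a i * x + b i) τ n c ≤
          compSeq (fun i x => a i * x + b i) σ n c) ∧
      (∀ i : Fin n, i.val < s → del (a (σ i)) = -1) ∧
      (∀ i : Fin n, t ≤ i.val → del (a (σ i)) = -1) ∧
      (∀ i : Fin n, s ≤ i.val → i.val < t → del (a (σ i)) = 1) ∧
      (∀ i j : Fin n, t ≤ i.val → i ≤ j →
        gam (a (σ i)) (b (σ i)) ≤ gam (a (σ j)) (b (σ j))) ∧
      (∀ i j : Fin n, i ≤ j → j.val < s →
        gam (a (σ i)) (b (σ i)) ≤ gam (a (σ j)) (b (σ j))) ∧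
      (∀ i j : Fin n, t ≤ i.val → j.val < s →
        gam (a (σ i)) (b (σ i)) ≤ gam (a (σ j)) (b (σ j))) ∧
      (∀ i j : Fin n, s ≤ i.val → i ≤ j → j.val < t →
        gam (a (σ i)) (b (σ i)) ≤ gam (a (σ j)) (b (σ j))) := by
  have hpos : ∀ i, 0 < a i := by
    intro i
    refine lt_of_le_of_ne (ha i) fun h => ?_
    rw [Finset.prod_eq_zero (Finset.mem_univ i) h.symm] at hprod
    linarith
  have hA : 1 ≤ ca a (List.finRange n) := by
    rwa [ca, ← List.ofFn_eq_map, List.prod_ofFn]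
  obtain ⟨l, g, hl, hopt, hs⟩ := exists_sorted (b := b) hpos (List.finRange n) hA
  have hlen : l.length = n := by rw [hl.length_eq, List.length_finRange]
  have hnd : l.Nodup := hl.nodup_iff.2 (List.nodup_finRange n)
  let σ₀ : Fin n → Fin n := fun i => l.get (i.cast hlen.symm)
  have hinj : Function.Injective σ₀ := by
    intro i j hij
    exact Fin.cast_injective _ (List.nodup_iff_injective_get.1 hnd hij)
  let σ : Equiv.Perm (Fin n) := Equiv.ofBijective σ₀ (Finite.injective_iff_bijective.1 hinj)
  have hσ : ∀ i, σ i = σ₀ i := fun i => rfl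
  have hmap : (List.finRange n).map σ = l := by
    rw [← List.ofFn_eq_map]
    apply List.ext_getElem
    · simp [hlen]
    · intro k h1 h2
      simp [hσ, σ₀]
  have hmono : ∀ i j : Fin n, i ≤ j → key a b g (σ i) ≤ key a b g (σ j) := by
    intro i j hij
    rcases hij.lt_or_eq with h | h
    · exact List.pairwise_iff_get.1 hs (i.cast hlen.symm) (j.cast hlen.symm) h
    · rw [h]
  have hcls : Monotone fun i => cls a b g (σ i) := by
    intro i j hij
    have := hmono i j hij
    rw [key, key, Prod.Lex.toLex_le_toLex] at this
    rcases this with h | h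
    · exact h.le
    · exact h.1.le
  have hgam : ∀ i j : Fin n, i ≤ j → cls a b g (σ i) = cls a b g (σ j) →
      gam (a (σ i)) (b (σ i)) ≤ gam (a (σ j)) (b (σ j)) := by
    intro i j hij he
    have := hmono i j hij
    rw [key, key, Prod.Lex.toLex_le_toLex] at this
    rcases this with h | h
    · exact absurd he h.ne
    · exact h.2
  obtain ⟨s, hsn, hs'⟩ := exists_cut _ hcls 1
  obtain ⟨t, htn, ht'⟩ := exists_cut _ hcls 2
  have c0 : ∀ i : Fin n, i.val < s → cls a b g (σ i) = 0 := fun i hi => by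
    have := (hs' i).1 hi
    omega
  have c2 : ∀ i : Fin n, t ≤ i.val → cls a b g (σ i) = 2 := fun i hi => by
    have h1 : ¬ cls a b g (σ i) < 2 := fun h => absurd ((ht' i).2 h) (not_lt.2 hi)
    have h2 : cls a b g (σ i) ≤ 2 := by unfold cls; split_ifs <;> simp
    omega
  have c1 : ∀ i : Fin n, s ≤ i.val → i.val < t → cls a b g (σ i) = 1 := fun i hi hi' => by
    have h1 : ¬ cls a b g (σ i) < 1 := fun h => absurd ((hs' i).2 h) (not_lt.2 hi)
    have h2 := (ht' i).1 hi'
    omega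
  have d0 : ∀ i, cls a b g i = 0 → del (a i) = -1 ∧ g < gam (a i) (b i) := by
    intro i h
    unfold cls at h
    split_ifs at h with h1 h2
    exact ⟨by simp [del, h1], not_le.1 h2⟩
  have d2 : ∀ i, cls a b g i = 2 → del (a i) = -1 ∧ gam (a i) (b i) ≤ g := by
    intro i h
    unfold cls at h
    split_ifs at h with h1 h2
    · omega
    · exact ⟨by simp [del, h1], h2⟩
  have d1 : ∀ i, cls a b g i = 1 → del (a i) = 1 := by
    intro i h
    unfold cls at h
    split_ifs at h with h1
    · simp [del, h1]
    · omega
  have hcomp : ∀ τ : Equiv.Perm (Fin n), compSeq (fun i x => a i * x + b i) τ n c =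
      ca a ((List.finRange n).map τ) * c + cb a b ((List.finRange n).map τ) := by
    intro τ
    rw [compSeq, List.take_of_length_le (by simp), foldl_eq]
  refine ⟨σ, s, t, ?_, htn, ?_, ?_, ?_, ?_, ?_, ?_, ?_, ?_⟩
  · by_contra hst
    rw [not_le] at hst
    have := c0 ⟨t, by omega⟩ hst
    rw [c2 ⟨t, by omega⟩ le_rfl] at this
    omega
  · intro τ
    have hτ : ((List.finRange n).map τ).Perm l := by
      refine List.Perm.trans ?_ hl.symm
      exact Equiv.Perm.map_finRange_perm τ
    rw [hcomp, hcomp, hmap, ca_perm hτ]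
    linarith [hopt _ hτ]
  · exact fun i hi => (d0 _ (c0 i hi)).1
  · exact fun i hi => (d2 _ (c2 i hi)).1
  · exact fun i hi hi' => d1 _ (c1 i hi hi')
  · intro i j hi hij
    exact hgam i j hij (by rw [c2 i hi, c2 j (hi.trans hij)])
  · intro i j hij hj
    exact hgam i j hij (by rw [c0 i (lt_of_le_of_lt hij hj), c0 j hj])
  · intro i j hi hj
    exact (d2 _ (c2 i hi)).2.trans (d0 _ (c0 j hj)).2.le
  · intro i j hi hij hj
    exact hgam i j hij (by rw [c1 i hi (lt_of_le_of_lt hij hj), c1 j (hi.trans hij) hj])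
end

section
/- Let c ∈ ℝ and let f_i(x) = a_i x + b_i (i ∈ [n]) be monotone nondecreasing linear functions, none of which is the identity (a_i ≥ 0 and (a_i, b_i) ≠ (1, 0)). If ∏_{i=1}^n a_i < 1, then there exists a permutation σ of [n] that is optimal for the maximum total composition ordering problem ((f_i)_{i∈[n]}, c) and integers 0 ≤ s ≤ t ≤ n such that δ(f_{σ(i)}) = +1 for all i ∈ {1,…,s} ∪ {t+1,…,n}, δ(f_{σ(i)}) = −1 for all i ∈ {s+1,…,t}, γ(f_{σ(t+1)}) ≤ ⋯ ≤ γ(f_{σ(n)}) ≤ γ(f_{σ(1)}) ≤ ⋯ ≤ γ(f_{σ(s)}), and γ(f_{σ(s+1)}) ≤ ⋯ ≤ γ(f_{σ(t)}). -/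
namespace CompOrd

variable {ι : Type*}

/-- Slope of the composition along `l`. -/
def A (a : ι → ℝ) (l : List ι) : ℝ := (l.map a).prod

/-- Intercept of the composition along `l`, the head of the list being applied first. -/
def B (a b : ι → ℝ) (l : List ι) : ℝ := l.foldl (fun x i => a i * x + b i) 0

/-! ### Slopes and intercepts of compositions -/

section Basic

variable (a b : ι → ℝ)

@[simp] lemma A_nil : A a [] = 1 := by simp [A]

@[simp] lemma A_cons (x : ι) (l : List ι) : A a (x :: l) = a x * A a l := by simp [A]

@[simp] lemma A_append (l l' : List ι) : A a (l ++ l') = A a l * A a l' := by simp [A]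

lemma A_nonneg (ha : ∀ i, 0 ≤ a i) (l : List ι) : 0 ≤ A a l := by
  induction l with
  | nil => simp
  | cons x l ih => simpa using mul_nonneg (ha x) ih

lemma one_le_A (l : List ι) (h : ∀ i ∈ l, 1 ≤ a i) : 1 ≤ A a l := by
  induction l with
  | nil => simp
  | cons x l ih =>
    have h1 := h x (by simp)
    have h2 := ih (fun i hi => h i (by simp [hi]))
    rw [A_cons]
    nlinarith

lemma foldl_eq (l : List ι) (c : ℝ) :
    l.foldl (fun x i => a i * x + b i) c = A a l * c + B a b l := by
  induction l generalizing c with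
  | nil => simp [B]
  | cons x l ih =>
    have h : B a b (x :: l) = l.foldl (fun x i => a i * x + b i) (a x * 0 + b x) := rfl
    rw [h, List.foldl_cons, ih, ih, A_cons]
    ring

@[simp] lemma B_nil : B a b [] = 0 := rfl

@[simp] lemma B_append (l l' : List ι) : B a b (l ++ l') = A a l' * B a b l + B a b l' := by
  conv_lhs => rw [B, List.foldl_append, foldl_eq]
  rfl

@[simp] lemma B_cons (x : ι) (l : List ι) : B a b (x :: l) = A a l * b x + B a b l := by
  have h : B a b (x :: l) = l.foldl (fun x i => a i * x + b i) (a x * 0 + b x) := rfl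
  rw [h, foldl_eq]
  ring

/-- `l` is an ordering of the multiset of indices in `l0` with the largest possible intercept. -/
def Opt (l0 l : List ι) : Prop :=
  l.Perm l0 ∧ ∀ l' : List ι, l'.Perm l0 → B a b l' ≤ B a b l

lemma exists_opt (l0 : List ι) : ∃ l, Opt a b l0 l := by
  classical
  obtain ⟨l, hl, hmax⟩ := l0.permutations.toFinset.exists_max_image (B a b)
    ⟨l0, by simp⟩
  refine ⟨l, by simpa using hl, fun l' hl' => hmax l' (by simpa using hl')⟩

variable {a b} {l0 : List ι}

lemma Opt.of_le {l l' : List ι} (h : Opt a b l0 l) (hp : l'.Perm l) (hB : B a b l ≤ B a b l') :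
    Opt a b l0 l' :=
  ⟨hp.trans h.1, fun k hk => (h.2 k hk).trans hB⟩

lemma perm_swap_blocks (F l₁ l₂ G : List ι) :
    (F ++ (l₂ ++ (l₁ ++ G))).Perm (F ++ (l₁ ++ (l₂ ++ G))) := by
  refine List.Perm.append_left F ?_
  rw [← List.append_assoc, ← List.append_assoc]
  exact List.Perm.append_right G List.perm_append_comm

lemma opt_cross {F l₁ l₂ G : List ι} (h : Opt a b l0 (F ++ (l₁ ++ (l₂ ++ G)))) (hG : 0 < A a G) :
    (1 - A a l₂) * B a b l₁ ≤ (1 - A a l₁) * B a b l₂ := by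
  have h1 := h.2 _ ((perm_swap_blocks F l₁ l₂ G).trans h.1)
  simp only [B_append, A_append] at h1
  have h2 : A a G * ((1 - A a l₂) * B a b l₁) ≤ A a G * ((1 - A a l₁) * B a b l₂) := by
    linarith
  exact le_of_mul_le_mul_left h2 hG

/-- The fixed point `p` of an optimal composition of slope `< 1` is the largest point of its orbit:
its image under an initial block `l₁` is the fixed point of the rotated composition `l₂ ++ l₁`. -/
lemma rotate_le {l₁ l₂ : List ι} (h : Opt a b l0 (l₁ ++ l₂)) {p : ℝ}
    (hlt : A a (l₁ ++ l₂) < 1) (hp : A a (l₁ ++ l₂) * p + B a b (l₁ ++ l₂) = p) :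
    A a l₁ * p + B a b l₁ ≤ p := by
  have h1 := h.2 _ (List.perm_append_comm.trans h.1 : (l₂ ++ l₁).Perm l0)
  simp only [B_append, A_append] at h1 hp hlt
  -- the fixed point of `l₂ ++ l₁` is `A l₁ * p + B l₁`
  have h2 : (1 - A a l₁ * A a l₂) * (A a l₁ * p + B a b l₁) = A a l₁ * B a b l₂ + B a b l₁ := by
    linear_combination (-A a l₁) * hp
  have h3 : (1 - A a l₁ * A a l₂) * p = A a l₂ * B a b l₁ + B a b l₂ := by
    linear_combination (-1) * hp
  refine le_of_mul_le_mul_left ?_ (sub_pos.2 hlt)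
  rw [h2, h3]
  exact h1

/-- The algebra behind `triple_le`; `(1 - a, b)`, `(1 - q, d)`, `(1 - a', b')` are the plane vectors
attached to three successive blocks. -/
lemma triple_algebra {a b q d a' b' : ℝ} (ha' : 0 ≤ a') (h1 : a < 1) (h2 : a' < 1)
    (hq : 1 ≤ q) (hprod : a * q * a' < 1)
    (e3 : (1 - a') * d ≤ (1 - q) * b')
    (e1 : (1 - q * a') * b ≤ (1 - a) * (a' * d + b'))
    (e2 : (1 - a') * (q * b + d) ≤ (1 - a * q) * b') :
    (1 - a) * d ≤ (1 - q) * b := by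
  by_contra! hlt
  -- pairwise determinants of the three vectors, which satisfy one linear relation
  set U := (1 - a) * d - (1 - q) * b with hU
  set W := (1 - q) * b' - (1 - a') * d with hW
  set E := (1 - a') * b - (1 - a) * b' with hE
  have rel : (1 - a) * W + (1 - a') * U = (q - 1) * E := by
    rw [hU, hW, hE]; ring
  have hUpos : 0 < U := by linarith
  have hWnn : 0 ≤ W := by linarith
  have k1 : E ≤ a' * U := by rw [hU, hE]; linarith
  have k2 : q * E ≤ W := by rw [hW, hE]; linarith
  have hEpos : 0 < E := by
    have h3 : 0 < (q - 1) * E := by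
      rw [← rel]
      have := mul_nonneg (sub_nonneg.2 h1.le) hWnn
      have := mul_pos (sub_pos.2 h2) hUpos
      linarith
    exact pos_of_mul_pos_right h3 (by linarith)
  have k3 : (a' * (1 - a) * q + (1 - a')) * E ≤ (a' * (q - 1)) * E := by
    have m1 := mul_le_mul_of_nonneg_left k2 (mul_nonneg ha' (sub_nonneg.2 h1.le))
    have m2 := mul_le_mul_of_nonneg_left k1 (sub_nonneg.2 h2.le)
    have m3 : a' * ((1 - a) * W + (1 - a') * U) = a' * ((q - 1) * E) := by rw [rel]
    linarith
  have k4 := le_of_mul_le_mul_right k3 hEpos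
  linarith

/-- In an optimal order `F, M₁, P, M₂, G` with these slopes, moving `P` in front of `M₁` is not
worse. (If `A M₂ > 0`, then `P` and `M₁` in fact commute; if `A M₂ = 0`, their order is
irrelevant.) The optimality conditions used are those of the adjacent block pairs `(P, M₂)`,
`(M₁, P ++ M₂)` and `(M₁ ++ P, M₂)`; none needs a positive slope of `M₂`. -/
lemma triple_le (ha : ∀ i, 0 ≤ a i) {F M₁ P M₂ G : List ι}
    (h : Opt a b l0 (F ++ (M₁ ++ (P ++ (M₂ ++ G)))))
    (hlt : A a (F ++ (M₁ ++ (P ++ (M₂ ++ G)))) < 1)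
    (hF : 1 ≤ A a F) (hG : 1 ≤ A a G) (h1 : A a M₁ < 1) (h2 : A a M₂ < 1) (hP : 1 ≤ A a P) :
    (1 - A a M₁) * B a b P ≤ (1 - A a P) * B a b M₁ := by
  have hG0 : 0 < A a G := by linarith
  have a2 := A_nonneg a ha M₂
  have e3 := opt_cross (F := F ++ M₁) (l₁ := P) (l₂ := M₂) (G := G) (by simpa using h) hG0
  have e1 := opt_cross (F := F) (l₁ := M₁) (l₂ := P ++ M₂) (G := G) (by simpa using h) hG0
  have e2 := opt_cross (F := F) (l₁ := M₁ ++ P) (l₂ := M₂) (G := G) (by simpa using h) hG0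
  simp only [A_append, B_append] at e1 e2 hlt
  have hprod : A a M₁ * A a P * A a M₂ < 1 := by
    by_contra! hge
    have : 1 ≤ A a F * (A a M₁ * A a P * A a M₂ * A a G) :=
      one_le_mul_of_one_le_of_one_le hF (one_le_mul_of_one_le_of_one_le hge hG)
    linarith
  exact triple_algebra a2 h1 h2 hP hprod e3 e1 e2

end Basic

/-! ### Counting inversions -/

section Inv

open Classical in
/-- Number of pairs in `l × l'` (with multiplicity) related by `r`. -/
noncomputable def cr (r : ι → ι → Prop) (l l' : List ι) : ℕ :=
  (l.map fun x => l'.countP fun y => r x y).sum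

/-- Number of pairs of positions `i < j` in a list whose entries are related by `r`. -/
noncomputable def inv (r : ι → ι → Prop) : List ι → ℕ
  | [] => 0
  | x :: l => cr r [x] l + inv r l

variable (r : ι → ι → Prop)

@[simp] lemma cr_append_left (l₁ l₂ l : List ι) : cr r (l₁ ++ l₂) l = cr r l₁ l + cr r l₂ l := by
  simp [cr]

@[simp] lemma cr_append_right (l l₁ l₂ : List ι) : cr r l (l₁ ++ l₂) = cr r l l₁ + cr r l l₂ := by
  induction l with
  | nil => simp [cr]
  | cons x l ih => simp only [cr, List.map_cons, List.sum_cons, List.countP_append] at ih ⊢; omega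

lemma cr_eq_zero {l l' : List ι} (h : ∀ x ∈ l, ∀ y ∈ l', ¬ r x y) : cr r l l' = 0 := by
  simp only [cr, List.sum_eq_zero_iff, List.mem_map]
  rintro _ ⟨x, hx, rfl⟩
  simpa [List.countP_eq_zero] using h x hx

lemma cr_pos {l l' : List ι} {x y : ι} (hx : x ∈ l) (hy : y ∈ l') (h : r x y) :
    0 < cr r l l' := by
  rw [Nat.pos_iff_ne_zero]
  intro h0
  simp only [cr, List.sum_eq_zero_iff, List.mem_map] at h0
  have := h0 _ ⟨x, hx, rfl⟩
  rw [List.countP_eq_zero] at this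
  exact this y hy (by simpa using h)

@[simp] lemma inv_append (l l' : List ι) : inv r (l ++ l') = inv r l + inv r l' + cr r l l' := by
  induction l with
  | nil => simp [inv, cr]
  | cons x l ih =>
    have : cr r (x :: l) l' = cr r [x] l' + cr r l l' := cr_append_left r [x] l l'
    simp only [List.cons_append, inv, ih, cr_append_right, this]
    omega

lemma inv_swap (F l₁ l₂ G : List ι) :
    inv r (F ++ (l₂ ++ (l₁ ++ G))) + cr r l₁ l₂ = inv r (F ++ (l₁ ++ (l₂ ++ G))) + cr r l₂ l₁ := by
  simp only [inv_append, cr_append_right]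
  omega

end Inv

/-! ### The shape of a minimal optimal order -/

section Shape

/-- An index of slope `< 1` is followed by one of slope `≥ 1`. -/
def signRel (a : ι → ℝ) (x y : ι) : Prop := a x < 1 ∧ 1 ≤ a y

/-- The values of `γ` are out of order. -/
def gamRel (a b : ι → ℝ) (x y : ι) : Prop := gam (a y) (b y) < gam (a x) (b x)

/-- The pair of inversion counts that is minimised lexicographically. -/
noncomputable def meas (a b : ι → ℝ) (l : List ι) : ℕ ×ₗ ℕ :=
  toLex (inv (signRel a) l, inv (gamRel a b) l)

/-- Optimal, with lexicographically least inversion counts among the optimal orders. -/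
def MinOpt (a b : ι → ℝ) (l0 l : List ι) : Prop :=
  Opt a b l0 l ∧ ∀ l', Opt a b l0 l' → ¬ meas a b l' < meas a b l

variable {a b : ι → ℝ} {l0 : List ι}

lemma exists_minOpt (a b : ι → ℝ) (l0 : List ι) : ∃ l, MinOpt a b l0 l := by
  have hwf : WellFounded (fun l l' : List ι => meas a b l < meas a b l') :=
    InvImage.wf (meas a b) wellFounded_lt
  obtain ⟨l, hl, hmin⟩ := hwf.has_min {l | Opt a b l0 l} (exists_opt a b l0)
  exact ⟨l, hl, hmin⟩

/-- In a minimal optimal order, a block swap that does not decrease the value cannot lower the inversion counts. -/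
lemma MinOpt.swap {F l₁ l₂ G : List ι} (ha : ∀ i, 0 ≤ a i)
    (h : MinOpt a b l0 (F ++ (l₁ ++ (l₂ ++ G))))
    (hle : (1 - A a l₁) * B a b l₂ ≤ (1 - A a l₂) * B a b l₁) :
    ¬ meas a b (F ++ (l₂ ++ (l₁ ++ G))) < meas a b (F ++ (l₁ ++ (l₂ ++ G))) := by
  refine h.2 _ (h.1.of_le (perm_swap_blocks F l₁ l₂ G) ?_)
  have := mul_le_mul_of_nonneg_left hle (A_nonneg a ha G)
  simp only [B_append, A_append]
  linarith

/-- For equal `δ`, applying the function with the smaller `γ` first is at least as good. -/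
lemma cross_le_of_gam_lt {a b a' b' : ℝ} (hs : 1 ≤ a ↔ 1 ≤ a') (h : gam a' b' < gam a b) :
    (1 - a) * b' ≤ (1 - a') * b := by
  unfold gam at h
  by_cases h1 : a = 1 <;> by_cases h1' : a' = 1
  · subst h1; subst h1'; simp
  · subst h1
    have : 1 ≤ a' := hs.1 le_rfl
    by_cases hb : b < 0
    · nlinarith
    · simp [hb] at h
  · subst h1'
    have : 1 ≤ a := hs.2 le_rfl
    by_cases hb : b' < 0
    · simp [hb] at h
    · nlinarith
  · simp only [h1, h1', if_false, EReal.coe_lt_coe_iff] at h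
    have e : b = b / (1 - a) * (1 - a) := by
      rw [div_mul_cancel₀]; exact sub_ne_zero.2 (Ne.symm h1)
    have e' : b' = b' / (1 - a') * (1 - a') := by
      rw [div_mul_cancel₀]; exact sub_ne_zero.2 (Ne.symm h1')
    have hpos : 0 ≤ (1 - a) * (1 - a') := by
      by_cases hh : 1 ≤ a
      · have := hs.1 hh; nlinarith
      · have : ¬ 1 ≤ a' := fun h' => hh (hs.2 h')
        push Not at hh this
        nlinarith
    have := mul_le_mul_of_nonneg_left h.le hpos
    calc (1 - a) * b' = (1 - a) * (1 - a') * (b' / (1 - a')) := by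
          conv_lhs => rw [e']
          ring
      _ ≤ (1 - a) * (1 - a') * (b / (1 - a)) := this
      _ = (1 - a') * b := by
          conv_rhs => rw [e]
          ring

lemma adjacent_le (ha : ∀ i, 0 ≤ a i) {F G : List ι} {x y : ι}
    (h : MinOpt a b l0 (F ++ x :: y :: G)) (hs : 1 ≤ a x ↔ 1 ≤ a y) :
    gam (a x) (b x) ≤ gam (a y) (b y) := by
  by_contra! hlt
  refine MinOpt.swap (F := F) (l₁ := [x]) (l₂ := [y]) (G := G) ha h
    (by simpa using cross_le_of_gam_lt hs hlt) ?_
  have z1 : cr (signRel a) [x] [y] = 0 :=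
    cr_eq_zero _ (by simp only [List.mem_singleton]; rintro _ rfl _ rfl ⟨h1, h2⟩; linarith [hs.2 h2])
  have z2 : cr (signRel a) [y] [x] = 0 :=
    cr_eq_zero _ (by simp only [List.mem_singleton]; rintro _ rfl _ rfl ⟨h1, h2⟩; linarith [hs.1 h2])
  have z3 : 0 < cr (gamRel a b) [x] [y] :=
    cr_pos _ (List.mem_singleton_self x) (List.mem_singleton_self y) hlt
  have z4 : cr (gamRel a b) [y] [x] = 0 :=
    cr_eq_zero _ (by
      simp only [List.mem_singleton]; rintro _ rfl _ rfl h1; exact lt_asymm hlt h1)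
  have s1 := inv_swap (signRel a) F [x] [y] G
  have s2 := inv_swap (gamRel a b) F [x] [y] G
  rw [meas, meas, Prod.Lex.toLex_lt_toLex]
  right
  constructor <;> dsimp only <;> omega

/-- Indices of slope `≥ 1` never separate two indices of slope `< 1`. -/
lemma no_pattern (ha : ∀ i, 0 ≤ a i) {F P G : List ι} {m m' : ι}
    (h : MinOpt a b l0 (F ++ m :: (P ++ m' :: G))) (hlt : A a (F ++ m :: (P ++ m' :: G)) < 1)
    (hm : a m < 1) (hm' : a m' < 1) (hP : ∀ i ∈ P, 1 ≤ a i) : P = [] := by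
  by_contra hne
  -- absorb `F` and `G` into the outer blocks if their slopes are `< 1`
  obtain ⟨F', M₁, hF, hF1, hM₁, hmem⟩ : ∃ F' M₁, F ++ [m] = F' ++ M₁ ∧ 1 ≤ A a F' ∧
      A a M₁ < 1 ∧ m ∈ M₁ := by
    by_cases hc : 1 ≤ A a F
    · exact ⟨F, [m], rfl, hc, by simpa using hm, by simp⟩
    · refine ⟨[], F ++ [m], by simp, by simp, ?_, by simp⟩
      push Not at hc
      simpa using mul_lt_one_of_nonneg_of_lt_one_left (A_nonneg a ha F) hc hm.le
  obtain ⟨M₂, G', hG, hG1, hM₂⟩ : ∃ M₂ G', m' :: G = M₂ ++ G' ∧ 1 ≤ A a G' ∧ A a M₂ < 1 := by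
    by_cases hc : 1 ≤ A a G
    · exact ⟨[m'], G, rfl, hc, by simpa using hm'⟩
    · refine ⟨m' :: G, [], by simp, by simp, ?_⟩
      push Not at hc
      simpa using mul_lt_one_of_nonneg_of_lt_one_left (ha m') hm' hc.le
  have heq : F ++ m :: (P ++ m' :: G) = F' ++ (M₁ ++ (P ++ (M₂ ++ G'))) := by
    rw [← List.append_assoc F', ← hF, ← hG]; simp
  rw [heq] at h hlt
  refine MinOpt.swap ha h
    (triple_le ha h.1 hlt hF1 hG1 hM₁ hM₂ (one_le_A a P hP)) ?_
  obtain ⟨x, hx⟩ := List.exists_mem_of_ne_nil P hne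
  have z1 : 0 < cr (signRel a) M₁ P := cr_pos _ hmem hx ⟨hm, hP x hx⟩
  have z2 : cr (signRel a) P M₁ = 0 :=
    cr_eq_zero _ (by rintro y hy _ _ ⟨h1, _⟩; linarith [hP y hy])
  have s1 := inv_swap (signRel a) F' M₁ P (M₂ ++ G')
  rw [meas, meas, Prod.Lex.toLex_lt_toLex]
  left
  dsimp only
  omega

lemma pairwise_of_run (ha : ∀ i, 0 ≤ a i) {F L G : List ι}
    (h : MinOpt a b l0 (F ++ (L ++ G))) (hs : ∀ x ∈ L, ∀ y ∈ L, 1 ≤ a x ↔ 1 ≤ a y) :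
    L.Pairwise (fun x y => gam (a x) (b x) ≤ gam (a y) (b y)) := by
  have : Trans (fun x y => gam (a x) (b x) ≤ gam (a y) (b y))
      (fun x y => gam (a x) (b x) ≤ gam (a y) (b y))
      (fun x y => gam (a x) (b x) ≤ gam (a y) (b y)) := ⟨fun h1 h2 => le_trans h1 h2⟩
  rw [← List.isChain_iff_pairwise, List.isChain_iff_forall_rel_of_append_cons_cons]
  rintro x y l₁ l₂ rfl
  exact adjacent_le (F := F ++ l₁) (G := l₂ ++ G) ha (by simpa using h)
    (hs x (by simp) y (by simp))

lemma split (ha : ∀ i, 0 ≤ a i) {l : List ι} (h : MinOpt a b l0 l) (hlt : A a l < 1) :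
    ∃ S M T, l = S ++ (M ++ T) ∧ (∀ i ∈ S, 1 ≤ a i) ∧ (∀ i ∈ M, a i < 1) ∧ (∀ i ∈ T, 1 ≤ a i) := by
  classical
  -- a nonempty remainder after the longest initial segment satisfying `p` starts with `¬ p`
  have key : ∀ (p : ι → Prop) (l : List ι), ∃ S R, l = S ++ R ∧ (∀ i ∈ S, p i) ∧
      (R = [] ∨ ∃ x R', R = x :: R' ∧ ¬ p x) := by
    intro p l
    induction l with
    | nil => exact ⟨[], [], by simp⟩
    | cons x l ih =>
      by_cases hx : p x
      · obtain ⟨S, R, rfl, hS, hR⟩ := ih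
        exact ⟨x :: S, R, by simp, by simpa using ⟨hx, hS⟩, hR⟩
      · exact ⟨[], x :: l, by simp, by simp, Or.inr ⟨x, l, rfl, hx⟩⟩
  obtain ⟨S, R, rfl, hS, hR⟩ := key (fun i => 1 ≤ a i) l
  rcases hR with rfl | ⟨m, R, rfl, hm⟩
  · exact ⟨S, [], [], by simp, hS, by simp, by simp⟩
  push Not at hm
  obtain ⟨M, T, rfl, hM, hT⟩ := key (fun i => a i < 1) R
  refine ⟨S, m :: M, T, by simp, hS, by simpa using ⟨hm, hM⟩, ?_⟩
  obtain ⟨P, Q, rfl, hP, hQ⟩ := key (fun i => 1 ≤ a i) T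
  rcases hQ with rfl | ⟨m', Q, rfl, hm'⟩
  · simpa using hP
  push Not at hm'
  exfalso
  -- the last index of slope `< 1` before `P`
  obtain ⟨M', k, hk, hk1⟩ : ∃ M' k, m :: M = M' ++ [k] ∧ a k < 1 := by
    have hne : m :: M ≠ [] := by simp
    refine ⟨(m :: M).dropLast, (m :: M).getLast hne, (List.dropLast_append_getLast hne).symm, ?_⟩
    rcases List.mem_cons.1 (List.getLast_mem hne) with h1 | h1
    · rwa [h1]
    · exact hM _ h1
  have heq : S ++ m :: (M ++ (P ++ m' :: Q)) = (S ++ M') ++ k :: (P ++ m' :: Q) := by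
    rw [← List.cons_append, hk]; simp
  rw [heq] at h hlt
  have hP0 := no_pattern ha h hlt hk1 hm' hP
  subst hP0
  rcases hT with h0 | ⟨x, R', h0, hx⟩
  · simp at h0
  · simp only [List.nil_append, List.cons.injEq] at h0
    exact hx (h0.1 ▸ hm')

/-- The fixed point `p` of the whole composition separates the two values of `γ`. -/
lemma last_le_first (hnid : ∀ i, (a i, b i) ≠ (1, 0)) {R R' : List ι} {x y : ι}
    (h : Opt a b l0 (x :: R)) (hy : x :: R = R' ++ [y]) (hlt : A a (x :: R) < 1)
    (hx1 : 1 ≤ a x) (hy1 : 1 ≤ a y) : gam (a y) (b y) ≤ gam (a x) (b x) := by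
  obtain ⟨p, hp⟩ : ∃ p : ℝ, A a (x :: R) * p + B a b (x :: R) = p := by
    refine ⟨B a b (x :: R) / (1 - A a (x :: R)), ?_⟩
    have : 1 - A a (x :: R) ≠ 0 := by linarith
    field_simp
    ring
  have hfst : a x * p + b x ≤ p := by
    simpa using rotate_le (l₁ := [x]) (l₂ := R) h hlt hp
  have hlst : p ≤ a y * p + b y := by
    rw [hy] at h hlt hp
    have h1 := rotate_le h hlt hp
    simp only [A_append, B_append, A_cons, B_cons, A_nil, B_nil] at hp
    have h2 : a y * (A a R' * p + B a b R') ≤ a y * p :=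
      mul_le_mul_of_nonneg_left h1 (by linarith)
    linarith
  have gx : (p : EReal) ≤ gam (a x) (b x) := by
    unfold gam
    split_ifs with e1 e2
    · exact le_top
    · exfalso
      rw [e1] at hfst
      exact hnid x (Prod.ext e1 (by dsimp only; linarith))
    · rw [EReal.coe_le_coe_iff]
      have : 1 - a x < 0 := by
        have := lt_of_le_of_ne hx1 (Ne.symm e1)
        linarith
      rw [le_div_iff_of_neg this]
      linarith
  have gy : gam (a y) (b y) ≤ (p : EReal) := by
    unfold gam
    split_ifs with e1 e2
    · rw [e1] at hlst
      linarith
    · exact bot_le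
    · rw [EReal.coe_le_coe_iff]
      have : 1 - a y < 0 := by
        have := lt_of_le_of_ne hy1 (Ne.symm e1)
        linarith
      rw [div_le_iff_of_neg this]
      linarith
  exact gy.trans gx

end Shape

/-! ### From lists to permutations -/

lemma exists_perm_of_list {n : ℕ} {l : List (Fin n)} (h : l.Perm (List.finRange n)) :
    ∃ σ : Equiv.Perm (Fin n), (List.finRange n).map σ = l := by
  have hlen : l.length = n := by simpa using h.length_eq
  have hnd : l.Nodup := h.nodup_iff.2 (List.nodup_finRange n)
  have hinj : Function.Injective (fun i : Fin n => l.get (i.cast hlen.symm)) := by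
    intro i j hij
    have := (List.nodup_iff_injective_get.1 hnd) hij
    simpa [Fin.ext_iff] using this
  refine ⟨Equiv.ofBijective _ (Finite.injective_iff_bijective.1 hinj), ?_⟩
  apply List.ext_getElem
  · simp [hlen]
  · intro i h1 h2
    simp

end CompOrd

/-- If `∏ aᵢ < 1`, there is an optimal permutation `σ` (0-indexed positions) and
`0 ≤ s ≤ t ≤ n` with `δ = +1` on positions `[0, s) ∪ [t, n)`, `δ = -1` on `[s, t)`,
`γ` nondecreasing along positions `t, …, n-1, 0, …, s-1`, and `γ` nondecreasing
along positions `s, …, t-1`. -/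
theorem stmt17 (n : ℕ) (c : ℝ) (a b : Fin n → ℝ) (ha : ∀ i, 0 ≤ a i)
    (hnid : ∀ i, (a i, b i) ≠ (1, 0)) (hprod : ∏ i, a i < 1) :
    ∃ (σ : Equiv.Perm (Fin n)) (s t : ℕ), s ≤ t ∧ t ≤ n ∧
      (∀ τ : Equiv.Perm (Fin n),
        compSeq (fun i x => a i * x + b i) τ n c ≤
          compSeq (fun i x => a i * x + b i) σ n c) ∧
      (∀ i : Fin n, i.val < s → del (a (σ i)) = 1) ∧
      (∀ i : Fin n, t ≤ i.val → del (a (σ i)) = 1) ∧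
      (∀ i : Fin n, s ≤ i.val → i.val < t → del (a (σ i)) = -1) ∧
      (∀ i j : Fin n, t ≤ i.val → i ≤ j →
        gam (a (σ i)) (b (σ i)) ≤ gam (a (σ j)) (b (σ j))) ∧
      (∀ i j : Fin n, i ≤ j → j.val < s →
        gam (a (σ i)) (b (σ i)) ≤ gam (a (σ j)) (b (σ j))) ∧
      (∀ i j : Fin n, t ≤ i.val → j.val < s →
        gam (a (σ i)) (b (σ i)) ≤ gam (a (σ j)) (b (σ j))) ∧
      (∀ i j : Fin n, s ≤ i.val → i ≤ j → j.val < t →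
        gam (a (σ i)) (b (σ i)) ≤ gam (a (σ j)) (b (σ j))) := by
  obtain ⟨l, hl⟩ := CompOrd.exists_minOpt a b (List.finRange n)
  have hA : CompOrd.A a l < 1 := by
    have h1 : CompOrd.A a l = CompOrd.A a (List.finRange n) := (hl.1.1.map a).prod_eq
    have h2 : CompOrd.A a (List.finRange n) = ∏ i, a i := by
      rw [CompOrd.A, ← List.ofFn_eq_map, List.prod_ofFn]
    rw [h1, h2]
    exact hprod
  obtain ⟨S, M, T, hsplit, hS, hM, hT⟩ := CompOrd.split ha hl hA
  obtain ⟨σ, hσ⟩ := CompOrd.exists_perm_of_list hl.1.1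
  have hlen : S.length + (M.length + T.length) = n := by
    have := hl.1.1.length_eq
    rw [hsplit] at this
    simpa using this
  have hget : ∀ i : Fin n, l[i.val]? = some (σ i) := by
    intro i
    rw [← hσ]
    simp
  rw [hsplit] at hget
  have getS : ∀ i : Fin n, i.val < S.length → S[i.val]? = some (σ i) := by
    intro i hi
    rw [← hget i, List.getElem?_append_left hi]
  have getM : ∀ i : Fin n, S.length ≤ i.val → i.val < S.length + M.length →
      M[i.val - S.length]? = some (σ i) := by
    intro i hi hi'
    rw [← hget i, List.getElem?_append_right hi, List.getElem?_append_left (by omega)]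
  have getT : ∀ i : Fin n, S.length + M.length ≤ i.val →
      T[i.val - S.length - M.length]? = some (σ i) := by
    intro i hi
    rw [← hget i, List.getElem?_append_right (by omega), List.getElem?_append_right (by omega)]
  -- a sorted list, read off at two positions
  have mono : ∀ (L : List (Fin n)) (i j : ℕ) (x y : Fin n),
      L.Pairwise (fun x y => gam (a x) (b x) ≤ gam (a y) (b y)) → i ≤ j →
      L[i]? = some x → L[j]? = some y → gam (a x) (b x) ≤ gam (a y) (b y) := by
    intro L i j x y hL hij hx hy
    obtain ⟨hi, rfl⟩ := List.getElem?_eq_some_iff.1 hx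
    obtain ⟨hj, rfl⟩ := List.getElem?_eq_some_iff.1 hy
    rcases hij.eq_or_lt with rfl | hij
    · exact le_rfl
    · exact List.pairwise_iff_getElem.1 hL i j hi hj hij
  rw [hsplit] at hl hA
  have pS : S.Pairwise (fun x y => gam (a x) (b x) ≤ gam (a y) (b y)) :=
    CompOrd.pairwise_of_run (F := []) (G := M ++ T) ha (by simpa using hl)
      (fun x hx y hy => iff_of_true (hS x hx) (hS y hy))
  have pM : M.Pairwise (fun x y => gam (a x) (b x) ≤ gam (a y) (b y)) :=
    CompOrd.pairwise_of_run (F := S) (G := T) ha hl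
      (fun x hx y hy => iff_of_false (not_le.2 (hM x hx)) (not_le.2 (hM y hy)))
  have pT : T.Pairwise (fun x y => gam (a x) (b x) ≤ gam (a y) (b y)) :=
    CompOrd.pairwise_of_run (F := S ++ M) (G := []) ha (by simpa using hl)
      (fun x hx y hy => iff_of_true (hT x hx) (hT y hy))
  refine ⟨σ, S.length, S.length + M.length, by omega, by omega, ?_, ?_, ?_, ?_, ?_, ?_, ?_, ?_⟩
  · intro τ
    have hval : ∀ ρ : Equiv.Perm (Fin n), compSeq (fun i x => a i * x + b i) ρ n c =
        (∏ i, a i) * c + CompOrd.B a b ((List.finRange n).map ρ) := by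
      intro ρ
      rw [compSeq, List.take_of_length_le (by simp), CompOrd.foldl_eq]
      congr 2
      rw [CompOrd.A, (ρ.map_finRange_perm.map a).prod_eq, ← List.ofFn_eq_map, List.prod_ofFn]
    rw [hval, hval, hσ, hsplit]
    have := hl.1.2 _ τ.map_finRange_perm
    linarith
  · intro i hi
    simp [del, hS _ (List.mem_of_getElem? (getS i hi))]
  · intro i hi
    simp [del, hT _ (List.mem_of_getElem? (getT i hi))]
  · intro i hi hi'
    simp [del, hM _ (List.mem_of_getElem? (getM i hi hi'))]
  · intro i j hi hij
    have hij' : i.val ≤ j.val := hij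
    exact mono T _ _ _ _ pT (by omega) (getT i hi) (getT j (by omega))
  · intro i j hij hj
    have hij' : i.val ≤ j.val := hij
    exact mono S _ _ _ _ pS hij' (getS i (by omega)) (getS j hj)
  · intro i j hi hj
    obtain ⟨x, S', rfl⟩ : ∃ x S', S = x :: S' :=
      List.exists_cons_of_ne_nil (by rintro rfl; simp at hj)
    obtain ⟨T', y, rfl⟩ : ∃ T' y, T = T' ++ [y] := by
      have hne : T ≠ [] := by
        rintro rfl
        have := i.isLt
        simp only [List.length_nil] at hlen
        omega
      exact ⟨T.dropLast, T.getLast hne, (List.dropLast_append_getLast hne).symm⟩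
    have hmid : gam (a y) (b y) ≤ gam (a x) (b x) :=
      CompOrd.last_le_first (R := S' ++ (M ++ (T' ++ [y]))) (R' := x :: S' ++ (M ++ T')) hnid
        (by simpa using hl.1) (by simp) (by simpa using hA) (hS x (by simp)) (hT y (by simp))
    have h1 : gam (a (σ i)) (b (σ i)) ≤ gam (a y) (b y) := by
      have hi' := getT i hi
      refine mono _ _ T'.length _ _ pT ?_ hi' (by simp)
      have := (List.getElem?_eq_some_iff.1 hi').1
      simp only [List.length_append, List.length_singleton] at this
      omega
    have h2 : gam (a x) (b x) ≤ gam (a (σ j)) (b (σ j)) :=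
      mono _ 0 _ _ _ pS (Nat.zero_le _) (by simp) (getS j hj)
    exact h1.trans (hmid.trans h2)
  · intro i j hi hij hj
    have hij' : i.val ≤ j.val := hij
    exact mono M _ _ _ _ pM (by omega) (getM i hi (by omega)) (getM j (by omega) hj)
end
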